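/- arXiv:1210.1059 — 4 statements merged into one kernel-verified Lean document; each statement's English description precedes it below -/
import Mathlib

section
/- For every k ≥ 1, Qₖ⁻ = P_{nₖ₊₁ − 1} is the minimum of Pₙ over all n ∈ Cₖ, i.e. P_{nₖ₊₁ − 1} ≤ Pₙ for all n with nₖ ≤ n < nₖ₊₁, with equality attained at n = nₖ₊₁ − 1. -/
/-!
Write `p n j = P(Sₙ = j)` and `P n k = P(|Sₙ| ≤ k)`.

On `Cₖ` the `n`-dependent threshold `ξ√n` may be replaced by the constant `k` (`Pxi_eq_P`): the least
integer `m ≡ k (mod 2)` with `m ≥ k²/ξ²` is `nₖ + 1`, and `Sₙ ≡ n (mod 2)`.  So it suffices to study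
`n ↦ P n k` for fixed `k`.  Conditioning on one sign gives
`P (n+1) k = P n k + p n (k+1) - p n k` (`P_succ`).  If `n ≡ k (mod 2)`, then `p n (k+1) = 0`, so
`P (n+1) k ≤ P n k`.  Applying the recursion twice,
`P (n+2) k - P n k = ((p n (k+1) - p n (k-1)) + (p n (k+2) - p n k)) / 2`, which is nonpositive
because `p n` is symmetric and unimodal (`prEq_unimodal`).  The last element `nₖ₊₁ - 1` of `Cₖ` has
the parity of `k + 1`, so every `n ∈ Cₖ` reaches it by at most one single step starting
at an index of the parity of `k`, followed by double steps.
-/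

/-- Probability of an event under the uniform distribution on sign vectors
`{-1,1}^n` (encoded as `Fin n → Bool`), which is the joint law of `n`
independent Rademacher random variables. -/
noncomputable def pr (n : ℕ) (E : (Fin n → Bool) → Prop) : ℝ :=
  letI := Classical.decPred E
  ((Finset.univ.filter E).card : ℝ) / 2 ^ n

/-- `S n ε = ε₁ + ⋯ + εₙ`, the sum of `n` Rademacher variables. -/
def S (n : ℕ) (ε : Fin n → Bool) : ℤ := ∑ i, if ε i then 1 else -1

/-- `P n k = P(|Sₙ| ≤ k)` (with an integer threshold, so `P n (-1) = 0`). -/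
noncomputable def P (n : ℕ) (k : ℤ) : ℝ := pr n fun ε => |S n ε| ≤ k

/-- `prEq n j = P(Sₙ = j)`. -/
noncomputable def prEq (n : ℕ) (j : ℤ) : ℝ := pr n fun ε => S n ε = j

/-- `Pxi ξ n = P(|Sₙ| ≤ ξ·√n)`. -/
noncomputable def Pxi (ξ : ℝ) (n : ℕ) : ℝ :=
  pr n fun ε => (|S n ε| : ℝ) ≤ ξ * Real.sqrt n

/-- `nseq ξ k = nₖ = 2·⌈(k²/ξ² + k)/2⌉ − k − 1`. -/
noncomputable def nseq (ξ : ℝ) (k : ℕ) : ℤ :=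
  2 * ⌈((k : ℝ) ^ 2 / ξ ^ 2 + (k : ℝ)) / 2⌉ - k - 1

lemma pr_eq_sum (n : ℕ) (E : (Fin n → Bool) → Prop) [DecidablePred E] :
    pr n E = (∑ ε, if E ε then (1 : ℝ) else 0) / 2 ^ n := by
  unfold pr
  rw [Finset.sum_boole]
  congr!

lemma S_cons (n : ℕ) (b : Bool) (ε : Fin n → Bool) :
    S (n + 1) (Fin.cons b ε) = (if b then 1 else -1) + S n ε := by
  simp [S, Fin.sum_univ_succ]

/-- Conditioning on the first sign. -/
lemma pr_succ (n : ℕ) (E : (Fin (n + 1) → Bool) → Prop) [DecidablePred E] :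
    pr (n + 1) E = (∑ ε : Fin n → Bool, ((if E (Fin.cons true ε) then (1 : ℝ) else 0)
      + (if E (Fin.cons false ε) then (1 : ℝ) else 0))) / 2 ^ n / 2 := by
  rw [pr_eq_sum, ← (Fin.consEquiv (fun _ : Fin (n + 1) => Bool)).sum_comp,
    Fintype.sum_prod_type, Fintype.sum_bool, ← Finset.sum_add_distrib, pow_succ, div_div]
  rfl

lemma prEq_succ (n : ℕ) (j : ℤ) :
    prEq (n + 1) j = (prEq n (j - 1) + prEq n (j + 1)) / 2 := by
  unfold prEq
  rw [pr_succ, pr_eq_sum, pr_eq_sum, ← add_div, ← Finset.sum_add_distrib]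
  congr 2
  refine Finset.sum_congr rfl fun ε _ => ?_
  simp only [S_cons]
  congr 1 <;> refine if_congr ?_ rfl rfl <;> simp <;> omega

lemma prEq_zero (j : ℤ) (hj : j ≠ 0) : prEq 0 j = 0 := by
  simp [prEq, pr_eq_sum, S, hj.symm]

lemma prEq_neg (n : ℕ) : ∀ j : ℤ, prEq n (-j) = prEq n j := by
  induction n with
  | zero =>
    intro j
    rcases eq_or_ne j 0 with rfl | hj
    · simp
    · rw [prEq_zero _ hj, prEq_zero _ (neg_ne_zero.mpr hj)]
  | succ n ih =>
    intro j
    rw [prEq_succ, prEq_succ, show -j - 1 = -(j + 1) by ring, show -j + 1 = -(j - 1) by ring,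
      ih, ih, add_comm]

lemma prEq_nonneg (n : ℕ) (j : ℤ) : 0 ≤ prEq n j := by
  unfold prEq pr
  positivity

/-- The law of `Sₙ` is unimodal along steps of length two. -/
lemma prEq_unimodal (n : ℕ) : ∀ j : ℤ, -1 ≤ j → prEq n (j + 2) ≤ prEq n j := by
  induction n with
  | zero =>
    intro j hj
    rw [prEq_zero _ (by omega)]
    exact prEq_nonneg _ _
  | succ n ih =>
    intro j hj
    rcases eq_or_lt_of_le hj with rfl | hj
    · rw [show (-1 : ℤ) + 2 = 1 by norm_num, prEq_neg]
    · have h1 := ih (j - 1) (by omega)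
      have h2 := ih (j + 1) (by omega)
      rw [prEq_succ, prEq_succ]
      rw [show j - 1 + 2 = j + 1 by ring] at h1
      rw [show j + 1 + 2 = j + 2 + 1 by ring] at h2
      rw [show j + 2 - 1 = j + 1 by ring]
      linarith

lemma S_parity (n : ℕ) (ε : Fin n → Bool) : (2 : ℤ) ∣ S n ε - n := by
  have h : S n ε - n = ∑ i, ((if ε i then 1 else -1) - 1 : ℤ) := by
    simp [S, Finset.sum_sub_distrib]
  rw [h]
  refine Finset.dvd_sum fun i _ => ?_
  split_ifs <;> norm_num

lemma prEq_odd (n : ℕ) (j : ℤ) (h : ¬ (2 : ℤ) ∣ j - n) : prEq n j = 0 := by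
  classical
  unfold prEq
  rw [pr_eq_sum, Finset.sum_eq_zero, zero_div]
  intro ε _
  rw [if_neg]
  rintro rfl
  exact h (S_parity n ε)

/-- The one-step recursion: the signs `±1` shift the window `[-k, k]` by one, so two boundary
masses enter and two leave; by symmetry they pair up. -/
lemma P_succ (n k : ℕ) :
    P (n + 1) k = P n k + prEq n (k + 1) - prEq n k := by
  have hs1 := prEq_neg n (k + 1)
  have hs2 := prEq_neg n k
  have key : P (n + 1) k = (2 * P n k + prEq n (-(k + 1 : ℤ)) - prEq n k
      + prEq n (k + 1) - prEq n (-(k : ℤ))) / 2 := by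
    unfold P prEq
    rw [pr_succ]
    simp only [pr_eq_sum]
    rw [← mul_div_assoc, Finset.mul_sum, ← add_div, ← sub_div, ← add_div, ← sub_div,
      ← Finset.sum_add_distrib, ← Finset.sum_sub_distrib, ← Finset.sum_add_distrib,
      ← Finset.sum_sub_distrib]
    congr 2
    refine Finset.sum_congr rfl fun ε _ => ?_
    simp only [S_cons, abs_le]
    generalize S n ε = s
    simp only [if_true, Bool.false_eq_true, if_false]
    split_ifs <;> first | (exfalso; omega) | norm_num
  rw [key, hs1, hs2]
  ring

lemma P_succ_le (n k : ℕ) (h : (2 : ℤ) ∣ (k : ℤ) - n) : P (n + 1) k ≤ P n k := by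
  have h0 := prEq_odd n (k + 1) (by omega)
  have := prEq_nonneg n k
  rw [P_succ, h0]
  linarith

lemma P_add_two_le (n k : ℕ) : P (n + 2) k ≤ P n k := by
  have h1 := prEq_unimodal n k (by omega)
  have h2 := prEq_unimodal n (k - 1) (by omega)
  have e1 := P_succ n k
  have e2 := P_succ (n + 1) k
  have e3 := prEq_succ n (k + 1)
  have e4 := prEq_succ n k
  rw [show (k : ℤ) - 1 + 2 = k + 1 by ring] at h2
  rw [show (k : ℤ) + 1 - 1 = k by ring, show (k : ℤ) + 1 + 1 = k + 2 by ring] at e3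
  rw [show n + 2 = n + 1 + 1 from rfl]
  linarith

lemma P_add_two_mul_le (n k d : ℕ) : P (n + 2 * d) k ≤ P n k := by
  induction d with
  | zero => simp
  | succ d ih => exact (P_add_two_le (n + 2 * d) k).trans ih

/-- For a fixed threshold `k`, an index `N` of the opposite parity minimizes `P · k` among all
indices up to `N`. -/
lemma P_le_of_le (n N k : ℕ) (hN : (2 : ℤ) ∣ (N : ℤ) - (k + 1)) (h : n ≤ N) :
    P N k ≤ P n k := by
  by_cases hp : (2 : ℤ) ∣ (k : ℤ) - n
  · obtain ⟨d, rfl⟩ : ∃ d, N = n + 1 + 2 * d := ⟨(N - (n + 1)) / 2, by omega⟩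
    exact (P_add_two_mul_le (n + 1) k d).trans (P_succ_le n k hp)
  · obtain ⟨d, rfl⟩ : ∃ d, N = n + 2 * d := ⟨(N - n) / 2, by omega⟩
    exact P_add_two_mul_le n k d

/-- On the block `Cₖ`, the threshold `ξ√n` is equivalent to the threshold `k`. -/
lemma Pxi_eq_P (ξ : ℝ) (hξ0 : 0 < ξ) (hξ1 : ξ ≤ 1) (k : ℕ) (hk : 1 ≤ k) (n : ℕ)
    (h1 : nseq ξ k ≤ (n : ℤ)) (h2 : (n : ℤ) < nseq ξ (k + 1)) : Pxi ξ n = P n k := by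
  unfold Pxi P
  congr 1
  funext ε
  apply propext
  have hpar := S_parity n ε
  rw [← Int.cast_abs]
  have hs0 : 0 ≤ |S n ε| := abs_nonneg _
  have hpar' : (2 : ℤ) ∣ |S n ε| - n := by
    rcases abs_choice (S n ε) with h | h <;> rw [h] <;> omega
  generalize |S n ε| = s at hs0 hpar'
  have hs0' : (0 : ℝ) ≤ s := by exact_mod_cast hs0
  have hk' : (1 : ℝ) ≤ k := by exact_mod_cast hk
  have hsq : (s : ℝ) ≤ ξ * √n ↔ (s : ℝ) ^ 2 ≤ ξ ^ 2 * n := by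
    rw [← abs_of_nonneg hs0', ← abs_of_nonneg (by positivity : 0 ≤ ξ * √n), ← sq_le_sq,
      mul_pow, Real.sq_sqrt (Nat.cast_nonneg n), sq_abs]
  rw [hsq]
  have hξ2 : 0 < ξ ^ 2 := by positivity
  have hξ3 : ξ ^ 2 ≤ 1 := pow_le_one₀ hξ0.le hξ1
  unfold nseq at h1 h2
  have c1 := Int.le_ceil (((k : ℝ) ^ 2 / ξ ^ 2 + (k : ℝ)) / 2)
  have c2 := Int.ceil_lt_add_one ((((k + 1 : ℕ) : ℝ) ^ 2 / ξ ^ 2 + ((k + 1 : ℕ) : ℝ)) / 2)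
  generalize ⌈((k : ℝ) ^ 2 / ξ ^ 2 + (k : ℝ)) / 2⌉ = c at *
  generalize ⌈(((k + 1 : ℕ) : ℝ) ^ 2 / ξ ^ 2 + ((k + 1 : ℕ) : ℝ)) / 2⌉ = c' at *
  constructor
  · intro hle
    by_contra! hlt
    have h3 : (n : ℤ) ≤ 2 * c' - k - 3 := by push_cast at h2; omega
    have h3' : (n : ℝ) ≤ 2 * c' - k - 3 := by exact_mod_cast h3
    have h4 : (n : ℝ) < ((k : ℝ) + 1) ^ 2 / ξ ^ 2 := by push_cast at c2; linarith
    rw [lt_div_iff₀ hξ2] at h4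
    have h5 : (k : ℝ) + 1 ≤ s := by exact_mod_cast hlt
    nlinarith
  · intro hle
    by_cases hp : (2 : ℤ) ∣ (n : ℤ) - k
    · have h3 : 2 * c - k ≤ (n : ℤ) := by omega
      have h3' : (2 : ℝ) * c - k ≤ n := by exact_mod_cast h3
      have h4 : (k : ℝ) ^ 2 / ξ ^ 2 ≤ n := by linarith
      rw [div_le_iff₀ hξ2] at h4
      have h5 : (s : ℝ) ≤ k := by exact_mod_cast hle
      nlinarith
    -- `n ≡ k + 1 (mod 2)`: here possibly `n < k²/ξ²`, but parity improves `s ≤ k` to `s ≤ k - 1`.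
    · have h3' : (2 : ℝ) * c - k - 1 ≤ n := by exact_mod_cast h1
      have h4 : (k : ℝ) ^ 2 / ξ ^ 2 ≤ n + 1 := by linarith
      rw [div_le_iff₀ hξ2] at h4
      have h5 : (s : ℝ) ≤ k - 1 := by
        have : s ≤ (k : ℤ) - 1 := by omega
        exact_mod_cast this
      nlinarith

lemma nseq_lt_succ (ξ : ℝ) (hξ0 : 0 < ξ) (hξ1 : ξ ≤ 1) (k : ℕ) (hk : 1 ≤ k) :
    0 ≤ nseq ξ k ∧ nseq ξ k < nseq ξ (k + 1) := by
  have hk' : (1 : ℝ) ≤ k := by exact_mod_cast hk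
  have hξ2 : 0 < ξ ^ 2 := by positivity
  have hξ3 : ξ ^ 2 ≤ 1 := pow_le_one₀ hξ0.le hξ1
  have c0 := Int.le_ceil (((k : ℝ) ^ 2 / ξ ^ 2 + (k : ℝ)) / 2)
  have c1 := Int.ceil_lt_add_one (((k : ℝ) ^ 2 / ξ ^ 2 + (k : ℝ)) / 2)
  have c2 := Int.le_ceil ((((k + 1 : ℕ) : ℝ) ^ 2 / ξ ^ 2 + ((k + 1 : ℕ) : ℝ)) / 2)
  unfold nseq
  generalize ⌈((k : ℝ) ^ 2 / ξ ^ 2 + (k : ℝ)) / 2⌉ = c at *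
  generalize ⌈(((k + 1 : ℕ) : ℝ) ^ 2 / ξ ^ 2 + ((k + 1 : ℕ) : ℝ)) / 2⌉ = c' at *
  push_cast at c2 ⊢
  have hx : (1 : ℝ) ≤ (k : ℝ) ^ 2 / ξ ^ 2 := by
    rw [le_div_iff₀ hξ2]; nlinarith
  -- A gap of three absorbs the rounding in both ceilings.
  have hd : (k : ℝ) ^ 2 / ξ ^ 2 + 3 ≤ ((k : ℝ) + 1) ^ 2 / ξ ^ 2 := by
    rw [← sub_nonneg, show ((k : ℝ) + 1) ^ 2 / ξ ^ 2 - ((k : ℝ) ^ 2 / ξ ^ 2 + 3)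
      = (2 * k + 1 - 3 * ξ ^ 2) / ξ ^ 2 by field_simp; ring]
    apply div_nonneg _ hξ2.le
    linarith
  constructor
  · have : (k : ℝ) + 1 ≤ 2 * c := by linarith
    have : (k : ℤ) + 1 ≤ 2 * c := by exact_mod_cast this
    omega
  · have : (2 : ℝ) * c + 1 < 2 * c' := by linarith
    have : 2 * c + 1 < 2 * c' := by exact_mod_cast this
    omega

/-- For `k ≥ 1`, `Qₖ⁻ = P_{nₖ₊₁−1}` is the minimum of `Pₙ` over `n ∈ Cₖ`. -/
theorem stmt_1 (ξ : ℝ) (hξ0 : 0 < ξ) (hξ1 : ξ ≤ 1) (k : ℕ) (hk : 1 ≤ k) :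
    IsLeast ((fun n : ℕ => Pxi ξ n) ''
        {n : ℕ | nseq ξ k ≤ (n : ℤ) ∧ (n : ℤ) < nseq ξ (k + 1)})
      (Pxi ξ (nseq ξ (k + 1) - 1).toNat) := by
  obtain ⟨h0, hlt⟩ := nseq_lt_succ ξ hξ0 hξ1 k hk
  obtain ⟨N, hN⟩ : ∃ N : ℕ, nseq ξ (k + 1) - 1 = N := ⟨_, (Int.toNat_of_nonneg (by omega)).symm⟩
  have hpar : (2 : ℤ) ∣ (N : ℤ) - (k + 1) := by
    rw [← hN, nseq]
    push_cast
    omega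
  rw [hN, Int.toNat_natCast]
  have hmem : nseq ξ k ≤ (N : ℤ) ∧ (N : ℤ) < nseq ξ (k + 1) := by omega
  refine ⟨⟨N, hmem, rfl⟩, ?_⟩
  rintro _ ⟨n, ⟨h1, h2⟩, rfl⟩
  simp only
  rw [Pxi_eq_P ξ hξ0 hξ1 k hk n h1 h2, Pxi_eq_P ξ hξ0 hξ1 k hk N hmem.1 hmem.2]
  exact P_le_of_le n N k hpar (by omega)
end

section
/- For all n ≥ n₁ one has Q₁⁻ = P_{n₂ − 1} ≤ Pₙ, i.e. P(|S_{n₂−1}| ≤ ξ·√(n₂−1)) ≤ P(|Sₙ| ≤ ξ·√n) for every n ≥ n₁. -/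
/-! ### The law of `S n` in terms of binomial coefficients -/

/-- The number of `+1` entries of a sign vector. -/
def numPos (n : ℕ) (ε : Fin n → Bool) : ℕ := (Finset.univ.filter fun i => ε i = true).card

lemma S_eq_numPos (n : ℕ) (ε : Fin n → Bool) : S n ε = 2 * (numPos n ε : ℤ) - n := by
  have h : ∀ i, (if ε i = true then (1 : ℤ) else -1) = 2 * (if ε i = true then 1 else 0) - 1 := by
    intro i; split_ifs <;> norm_num
  unfold S numPos
  rw [Finset.sum_congr rfl fun i _ => h i, Finset.sum_sub_distrib, ← Finset.mul_sum]
  simp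

lemma card_numPos (n i : ℕ) :
    (Finset.univ.filter fun ε : Fin n → Bool => numPos n ε = i).card = n.choose i := by
  have h : (Finset.powersetCard i (Finset.univ : Finset (Fin n))).card = n.choose i := by simp
  rw [← h]
  refine Finset.card_bij' (fun ε _ => Finset.univ.filter fun k => ε k = true)
    (fun s _ => fun k => decide (k ∈ s)) ?_ ?_ ?_ ?_
  · intro ε hε
    rw [Finset.mem_filter] at hε
    simpa [numPos, Finset.mem_powersetCard] using hε
  · intro s hs
    rw [Finset.mem_filter]
    simpa [numPos, Finset.mem_powersetCard] using hs
  · intro ε _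
    ext k; simp
  · intro s _
    ext k; simp

lemma sum_choose_le_pr (n : ℕ) (I : Finset ℕ) (E : (Fin n → Bool) → Prop)
    (h : ∀ ε, numPos n ε ∈ I → E ε) :
    (∑ i ∈ I, (n.choose i : ℝ)) / 2 ^ n ≤ pr n E := by
  classical
  unfold pr
  apply div_le_div_of_nonneg_right _ (by positivity)
  have h1 := Finset.card_eq_sum_card_fiberwise (f := numPos n)
    (s := Finset.univ.filter fun ε : Fin n → Bool => numPos n ε ∈ I) (t := I)
    (fun ε hε => by simpa using hε)
  have h2 : ∀ i ∈ I, (Finset.filter (fun ε => numPos n ε = i)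
      (Finset.univ.filter fun ε : Fin n → Bool => numPos n ε ∈ I)).card = n.choose i := by
    intro i hi
    rw [← card_numPos, Finset.filter_filter]
    congr 1
    ext ε
    simp only [Finset.mem_filter, Finset.mem_univ, true_and]
    exact ⟨fun h => h.2, fun h => ⟨h ▸ hi, h⟩⟩
  rw [Finset.sum_congr rfl h2] at h1
  rw [← Nat.cast_sum, ← h1]
  exact_mod_cast Finset.card_le_card fun ε hε => by
    simp only [Finset.mem_filter, Finset.mem_univ, true_and] at hε ⊢
    exact h ε hε

lemma pr_le_choose (n i : ℕ) (E : (Fin n → Bool) → Prop) (h : ∀ ε, E ε → numPos n ε = i) :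
    pr n E ≤ (n.choose i : ℝ) / 2 ^ n := by
  classical
  unfold pr
  apply div_le_div_of_nonneg_right _ (by positivity)
  rw [← card_numPos]
  exact_mod_cast Finset.card_le_card fun ε hε => by
    simp only [Finset.mem_filter, Finset.mem_univ, true_and] at hε ⊢
    exact h ε hε

/-! ### Central probabilities -/

/-- The central probability `c m = P(S_{2m} = 0)`. -/
noncomputable def c (m : ℕ) : ℝ := (m.centralBinom : ℝ) / 4 ^ m

lemma c_pos (m : ℕ) : 0 < c m := by
  have := Nat.centralBinom_pos m
  unfold c; positivity

lemma c_succ (m : ℕ) : c (m + 1) * (2 * m + 2) = c m * (2 * m + 1) := by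
  have h : ((m : ℝ) + 1) * ((m + 1).centralBinom : ℝ)
      = 2 * (2 * m + 1) * (m.centralBinom : ℝ) := by
    exact_mod_cast Nat.succ_mul_centralBinom_succ m
  unfold c
  rw [pow_succ]
  field_simp
  linear_combination 2 * h

lemma c_anti : Antitone c := by
  refine antitone_nat_of_succ_le fun m => ?_
  have h := c_succ m
  have := c_pos m
  have := c_pos (m + 1)
  nlinarith [(Nat.cast_nonneg m : (0 : ℝ) ≤ m)]

/-- `c m² (m + 1/4)` is increasing. The shift `1/4` sharpens the bound `c m² m ≥ c a² a`, leaving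
room for the final comparison to hold already at `a = 1`. -/
lemma c_sq_mono : Monotone fun m : ℕ => c m ^ 2 * (4 * m + 1) := by
  refine monotone_nat_of_le_succ fun m => ?_
  have h := c_succ m
  have hm : (0 : ℝ) ≤ m := Nat.cast_nonneg m
  have h2 : c (m + 1) ^ 2 * (2 * m + 2) ^ 2 = c m ^ 2 * (2 * m + 1) ^ 2 := by
    rw [← mul_pow, h, mul_pow]
  have h3 : (0 : ℝ) < (2 * m + 2) ^ 2 := by positivity
  push_cast
  refine le_of_mul_le_mul_right ?_ h3
  have : c (m + 1) ^ 2 * (4 * (m + 1) + 1) * (2 * (m : ℝ) + 2) ^ 2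
      = c m ^ 2 * ((2 * m + 1) ^ 2 * (4 * (m + 1) + 1)) := by
    linear_combination (4 * ((m : ℝ) + 1) + 1) * h2
  rw [this, mul_assoc]
  apply mul_le_mul_of_nonneg_left _ (sq_nonneg _)
  nlinarith

/-! ### Parabolic lower bounds for the atoms -/

lemma choose_even_upper_half (N s : ℕ) (hs : s ≤ N) :
    ((2 * N).choose N : ℝ) * (1 - (s : ℝ) ^ 2 / (N + 1)) ≤ ((2 * N).choose (N + s) : ℝ) := by
  induction s with
  | zero => simp
  | succ s ih =>
    have ih := ih (by omega)
    have h := Nat.choose_succ_right_eq (2 * N) (N + s)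
    have h1 : 2 * N - (N + s) = N - s := by omega
    rw [h1] at h
    have h2 : ((2 * N).choose (N + (s + 1)) : ℝ) * (N + s + 1)
        = (2 * N).choose (N + s) * ((N : ℝ) - s) := by
      rw [← Nat.cast_sub (by omega)]; exact_mod_cast h
    have hN : (s : ℝ) + 1 ≤ N := by exact_mod_cast hs
    have hs0 : (0 : ℝ) ≤ s := Nat.cast_nonneg s
    have hp : (0 : ℝ) < N + s + 1 := by linarith
    have hC : (0 : ℝ) ≤ (2 * N).choose N := Nat.cast_nonneg _
    refine le_of_mul_le_mul_right ?_ hp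
    rw [h2]
    refine le_trans ?_ (mul_le_mul_of_nonneg_right ih (by linarith))
    rw [mul_assoc, mul_assoc]
    refine mul_le_mul_of_nonneg_left ?_ hC
    have hD : (0 : ℝ) < N + 1 := by linarith
    push_cast
    rw [← sub_nonneg]
    have : (1 - (s : ℝ) ^ 2 / (N + 1)) * (N - s) - (1 - ((s : ℝ) + 1) ^ 2 / (N + 1)) * (N + s + 1)
        = (s ^ 2 * (1 + s) + s * (s + 1) ^ 2) / (N + 1) := by
      field_simp; ring
    rw [this]; positivity

lemma choose_odd_upper_half (N s : ℕ) (hs : s ≤ N) :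
    ((2 * N + 1).choose (N + 1) : ℝ) * (1 - (s : ℝ) * (s + 1) / (N + 2))
      ≤ ((2 * N + 1).choose (N + 1 + s) : ℝ) := by
  induction s with
  | zero => simp
  | succ s ih =>
    have ih := ih (by omega)
    have h := Nat.choose_succ_right_eq (2 * N + 1) (N + 1 + s)
    have h1 : 2 * N + 1 - (N + 1 + s) = N - s := by omega
    rw [h1] at h
    have h2 : ((2 * N + 1).choose (N + 1 + (s + 1)) : ℝ) * (N + 1 + s + 1)
        = (2 * N + 1).choose (N + 1 + s) * ((N : ℝ) - s) := by
      rw [← Nat.cast_sub (by omega)]; exact_mod_cast h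
    have hN : (s : ℝ) + 1 ≤ N := by exact_mod_cast hs
    have hs0 : (0 : ℝ) ≤ s := Nat.cast_nonneg s
    have hp : (0 : ℝ) < N + 1 + s + 1 := by linarith
    have hC : (0 : ℝ) ≤ (2 * N + 1).choose (N + 1) := Nat.cast_nonneg _
    refine le_of_mul_le_mul_right ?_ hp
    rw [h2]
    refine le_trans ?_ (mul_le_mul_of_nonneg_right ih (by linarith))
    rw [mul_assoc, mul_assoc]
    refine mul_le_mul_of_nonneg_left ?_ hC
    have hD : (0 : ℝ) < N + 2 := by linarith
    push_cast
    rw [← sub_nonneg]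
    have : (1 - (s : ℝ) * (s + 1) / (N + 2)) * (N - s)
        - (1 - ((s : ℝ) + 1) * (s + 1 + 1) / (N + 2)) * (N + 1 + s + 1)
        = (2 * (s * (s + 1) * (s + 2))) / (N + 2) := by
      field_simp; ring
    rw [this]; positivity

/-- Parabolic lower bound for the atoms of `S_{2N}`. -/
lemma choose_even_lower (N i : ℕ) (hi : i ≤ 2 * N) :
    ((2 * N).choose N : ℝ) * (1 - ((i : ℝ) - N) ^ 2 / (N + 1)) ≤ ((2 * N).choose i : ℝ) := by
  rcases le_total N i with h | h
  · obtain ⟨s, rfl⟩ := Nat.exists_eq_add_of_le h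
    have := choose_even_upper_half N s (by omega)
    push_cast
    simpa using this
  · obtain ⟨s, hs⟩ := Nat.exists_eq_add_of_le h
    have := choose_even_upper_half N s (by omega)
    rw [← Nat.choose_symm hi, show 2 * N - i = N + s by omega]
    have e : (i : ℝ) - N = -s := by rw [hs]; push_cast; ring
    rw [e, neg_sq]; exact this

/-- Parabolic lower bound for the atoms of `S_{2N+1}`. -/
lemma choose_odd_lower (N i : ℕ) (hi : i ≤ 2 * N + 1) :
    ((2 * N + 1).choose (N + 1) : ℝ) * (1 - ((i : ℝ) - N - 1) * (i - N) / (N + 2))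
      ≤ ((2 * N + 1).choose i : ℝ) := by
  rcases le_or_gt (N + 1) i with h | h
  · obtain ⟨s, rfl⟩ := Nat.exists_eq_add_of_le h
    have := choose_odd_upper_half N s (by omega)
    push_cast
    convert this using 4
    ring
  · obtain ⟨s, hs⟩ := Nat.exists_eq_add_of_le (Nat.lt_succ_iff.mp h)
    have := choose_odd_upper_half N s (by omega)
    rw [← Nat.choose_symm hi, show 2 * N + 1 - i = N + 1 + s by omega]
    have e : (i : ℝ) = N - s := by rw [hs]; push_cast; ring
    rw [e]
    convert this using 4
    ring

/-! ### Summing the atoms around the centre -/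

lemma sum_shift_sq (D r : ℝ) (m : ℕ) : ∑ t ∈ Finset.range m, (1 - ((t : ℝ) - r) ^ 2 / D)
    = m - ((m - 1) * m * (2 * m - 1) / 6 - r * m * (m - 1) + m * r ^ 2) / D := by
  induction m with
  | zero => simp
  | succ m ih => rw [Finset.sum_range_succ, ih]; push_cast; ring

lemma sum_shift_prod (D r : ℝ) (m : ℕ) :
    ∑ t ∈ Finset.range m, (1 - ((t : ℝ) - r - 1) * (t - r) / D)
    = m - ((m - 1) * m * (2 * m - 1) / 6 - (2 * r + 1) * m * (m - 1) / 2
      + m * (r * (r + 1))) / D := by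
  induction m with
  | zero => simp
  | succ m ih => rw [Finset.sum_range_succ, ih]; push_cast; ring

lemma sum_even_lower (N r : ℕ) (hr : r ≤ N) (E : (Fin (2 * N) → Bool) → Prop)
    (h : ∀ ε, |S (2 * N) ε| ≤ 2 * (r : ℤ) → E ε) :
    c N * (2 * r + 1) * (1 - r * (r + 1) / (3 * (N + 1))) ≤ pr (2 * N) E := by
  have h1 := sum_choose_le_pr (2 * N) ((Finset.range (2 * r + 1)).image fun t => N - r + t) E (by
    intro ε hε
    apply h
    simp only [Finset.mem_image, Finset.mem_range] at hε
    obtain ⟨t, ht, he⟩ := hε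
    rw [S_eq_numPos, abs_le]
    omega)
  refine le_trans ?_ h1
  rw [Finset.sum_image (by intro x _ y _ hxy; simpa using hxy)]
  have h2 : ∑ t ∈ Finset.range (2 * r + 1), ((2 * N).choose N : ℝ)
        * (1 - ((t : ℝ) - r) ^ 2 / (N + 1))
      ≤ ∑ t ∈ Finset.range (2 * r + 1), ((2 * N).choose (N - r + t) : ℝ) := by
    refine Finset.sum_le_sum fun t ht => ?_
    have ht := Finset.mem_range.mp ht
    have := choose_even_lower N (N - r + t) (by omega)
    have e : ((N - r + t : ℕ) : ℝ) - N = t - r := by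
      push_cast [Nat.cast_sub hr]; ring
    rwa [e] at this
  rw [← Finset.mul_sum, sum_shift_sq] at h2
  refine le_trans (le_of_eq ?_) (div_le_div_of_nonneg_right h2 (by positivity))
  have h4 : (2 : ℝ) ^ (2 * N) = 4 ^ N := by rw [pow_mul]; norm_num
  have hD : (N : ℝ) + 1 ≠ 0 := by positivity
  rw [h4, c, Nat.centralBinom_eq_two_mul_choose]
  push_cast
  field_simp
  ring

lemma choose_odd_center (N : ℕ) :
    ((2 * N + 1).choose (N + 1) : ℝ) / 2 ^ (2 * N + 1) = c (N + 1) := by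
  have h : (N + 1).centralBinom = 2 * (2 * N + 1).choose (N + 1) := by
    rw [Nat.centralBinom_eq_two_mul_choose, show 2 * (N + 1) = 2 * N + 1 + 1 by ring,
      Nat.choose_succ_succ, ← Nat.choose_symm (show N ≤ 2 * N + 1 by omega),
      show 2 * N + 1 - N = N + 1 by omega]
    simp only [Nat.succ_eq_add_one]; ring
  have h4 : (2 : ℝ) ^ (2 * N + 1) = 2 * 4 ^ N := by rw [pow_succ, pow_mul]; norm_num; ring
  rw [c, h, h4, pow_succ]
  push_cast
  field_simp
  norm_num

lemma sum_odd_lower (N r : ℕ) (hr : r ≤ N) (E : (Fin (2 * N + 1) → Bool) → Prop)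
    (h : ∀ ε, |S (2 * N + 1) ε| ≤ 2 * (r : ℤ) + 1 → E ε) :
    c (N + 1) * (2 * (r + 1)) * (1 - r * (r + 2) / (3 * (((N + 1 : ℕ) : ℝ) + 1)))
      ≤ pr (2 * N + 1) E := by
  have h1 := sum_choose_le_pr (2 * N + 1)
    ((Finset.range (2 * r + 2)).image fun t => N - r + t) E (by
    intro ε hε
    apply h
    simp only [Finset.mem_image, Finset.mem_range] at hε
    obtain ⟨t, ht, he⟩ := hε
    rw [S_eq_numPos, abs_le]
    omega)
  refine le_trans ?_ h1
  rw [Finset.sum_image (by intro x _ y _ hxy; simpa using hxy)]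
  have h2 : ∑ t ∈ Finset.range (2 * r + 2), ((2 * N + 1).choose (N + 1) : ℝ)
        * (1 - ((t : ℝ) - r - 1) * (t - r) / (N + 2))
      ≤ ∑ t ∈ Finset.range (2 * r + 2), ((2 * N + 1).choose (N - r + t) : ℝ) := by
    refine Finset.sum_le_sum fun t ht => ?_
    have ht := Finset.mem_range.mp ht
    have := choose_odd_lower N (N - r + t) (by omega)
    have e : ((N - r + t : ℕ) : ℝ) - N = t - r := by
      push_cast [Nat.cast_sub hr]; ring
    rwa [e] at this
  rw [← Finset.mul_sum, sum_shift_prod] at h2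
  refine le_trans (le_of_eq ?_) (div_le_div_of_nonneg_right h2 (by positivity))
  have hD : (N : ℝ) + 2 ≠ 0 := by positivity
  have hD' : (N : ℝ) + 1 + 1 ≠ 0 := by positivity
  rw [← choose_odd_center]
  push_cast
  field_simp
  ring

/-! ### The polynomial inequalities -/

/-- A quadratic with leading coefficient `-12` that is nonnegative at `l` and `u` is nonnegative
in between. -/
lemma concave_nonneg (α β l u x : ℝ) (hl : l ≤ x) (hu : x ≤ u)
    (h1 : 0 ≤ α + β * l - 12 * l ^ 2) (h2 : 0 ≤ α + β * u - 12 * u ^ 2) :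
    0 ≤ α + β * x - 12 * x ^ 2 := by
  rcases eq_or_lt_of_le (hl.trans hu) with h | h
  · have : x = l := by linarith
    rw [this]; exact h1
  · have e : (u - l) * (α + β * x - 12 * x ^ 2)
        = (u - x) * (α + β * l - 12 * l ^ 2) + (x - l) * (α + β * u - 12 * u ^ 2)
          + 12 * ((x - l) * (u - x) * (u - l)) := by ring
    have h3 : 0 ≤ (u - l) * (α + β * x - 12 * x ^ 2) := by
      rw [e]
      have a1 := sub_nonneg.mpr hl
      have a2 := sub_nonneg.mpr hu
      have a3 := sub_pos.mpr h
      positivity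
    exact nonneg_of_mul_nonneg_right h3 (sub_pos.mpr h)

lemma poly_even (a r N : ℝ) (ha : 1 ≤ a) (hr : 1 ≤ r) (h1 : r ^ 2 * a ≤ N)
    (h2 : N ≤ (r + 1) ^ 2 * (a + 1) - 1) :
    4 * N + 1 ≤ (2 * r + 1) ^ 2 * (1 - 2 * (r * (r + 1) / (3 * (N + 1)))) * (4 * a + 1) := by
  obtain ⟨b, hb, rfl⟩ : ∃ b, 0 ≤ b ∧ a = 1 + b := ⟨a - 1, by linarith, by ring⟩
  obtain ⟨p, hp, rfl⟩ : ∃ p, 0 ≤ p ∧ r = 1 + p := ⟨r - 1, by linarith, by ring⟩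
  have hN : 0 < N + 1 := by
    have : 0 ≤ (1 + p) ^ 2 * (1 + b) := by positivity
    linarith
  -- the only negative coefficient at the lower endpoint is `-2 p²`, absorbed by `8 p⁴` and `1`
  have hq : 0 ≤ 8 * p ^ 4 - 2 * p ^ 2 + 1 := by nlinarith [sq_nonneg (p ^ 2 - 1 / 8)]
  have hpos : 0 ≤ 36 * p ^ 4 * b ^ 2 + 52 * p ^ 4 * b + 192 * p ^ 3 * b ^ 2 + 252 * p ^ 3 * b
        + 12 * p ^ 3 + 372 * p ^ 2 * b ^ 2 + 464 * p ^ 2 * b + 312 * p * b ^ 2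
        + 420 * p * b + 42 * p + 96 * b ^ 2 + 168 * b + 59 := by
    positivity
  have key := concave_nonneg
    ((2 * (1 + p) + 1) ^ 2 * (3 - 2 * ((1 + p) * (1 + p + 1))) * (4 * (1 + b) + 1) - 3)
    ((2 * (1 + p) + 1) ^ 2 * 3 * (4 * (1 + b) + 1) - 15) _ _ N h1 h2
    (by linarith) (by ring_nf; positivity)
  rw [← sub_nonneg]
  have e : (2 * (1 + p) + 1) ^ 2 * (1 - 2 * ((1 + p) * (1 + p + 1) / (3 * (N + 1))))
        * (4 * (1 + b) + 1) - (4 * N + 1)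
      = ((2 * (1 + p) + 1) ^ 2 * (3 - 2 * ((1 + p) * (1 + p + 1))) * (4 * (1 + b) + 1) - 3
        + ((2 * (1 + p) + 1) ^ 2 * 3 * (4 * (1 + b) + 1) - 15) * N - 12 * N ^ 2)
        / (3 * (N + 1)) := by
    field_simp; ring
  rw [e]
  positivity

lemma poly_odd (a r M : ℝ) (ha : 1 ≤ a) (hr : 0 ≤ r) (h1 : (2 * r + 1) ^ 2 * a ≤ 4 * M - 2)
    (h2 : 4 * M - 1 ≤ (2 * r + 3) ^ 2 * (a + 1)) :
    4 * M + 1 ≤ (2 * (r + 1)) ^ 2 * (1 - 2 * (r * (r + 2) / (3 * (M + 1)))) * (4 * a + 1) := by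
  obtain ⟨b, hb, rfl⟩ : ∃ b, 0 ≤ b ∧ a = 1 + b := ⟨a - 1, by linarith, by ring⟩
  have hM : 0 < M + 1 := by
    have : 0 ≤ (2 * r + 1) ^ 2 * (1 + b) := by positivity
    linarith
  -- the only negative coefficient at the lower endpoint is `-4 r³`, absorbed by its neighbours
  have hq : 0 ≤ r ^ 2 * (8 * r ^ 2 - 4 * r + 40) :=
    mul_nonneg (sq_nonneg r) (by nlinarith [sq_nonneg (r - 1)])
  have hpos : 0 ≤ 36 * r ^ 4 * b ^ 2 + 52 * r ^ 4 * b + 120 * r ^ 3 * b ^ 2 + 148 * r ^ 3 * b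
        + 138 * r ^ 2 * b ^ 2 + 200 * r ^ 2 * b + 66 * r * b ^ 2 + 203 * r * b
        + 157 * r + 45/4 * b ^ 2 + 363/4 * b + 84 := by
    positivity
  have key := concave_nonneg
    ((2 * (r + 1)) ^ 2 * (3 - 2 * (r * (r + 2))) * (4 * (1 + b) + 1) - 3)
    ((2 * (r + 1)) ^ 2 * 3 * (4 * (1 + b) + 1) - 15)
    (((2 * r + 1) ^ 2 * (1 + b) + 2) / 4) (((2 * r + 3) ^ 2 * (1 + b + 1) + 1) / 4) M
    (by linarith) (by linarith) (by linarith) (by ring_nf; positivity)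
  rw [← sub_nonneg]
  have e : (2 * (r + 1)) ^ 2 * (1 - 2 * (r * (r + 2) / (3 * (M + 1))))
        * (4 * (1 + b) + 1) - (4 * M + 1)
      = ((2 * (r + 1)) ^ 2 * (3 - 2 * (r * (r + 2))) * (4 * (1 + b) + 1) - 3
        + ((2 * (r + 1)) ^ 2 * 3 * (4 * (1 + b) + 1) - 15) * M - 12 * M ^ 2)
        / (3 * (M + 1)) := by
    field_simp; ring
  rw [e]
  positivity

/-- Combines `c_sq_mono` with `(1 - t)² ≥ 1 - 2t`; the last hypothesis forces `t < 1/2`, so that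
square roots may be taken. -/
lemma final_bound (a N : ℕ) (K t : ℝ) (haN : a ≤ N) (hK : 0 ≤ K)
    (h : 4 * (N : ℝ) + 1 ≤ K ^ 2 * (1 - 2 * t) * (4 * a + 1)) :
    c a ≤ c N * K * (1 - t) := by
  have hm : c a ^ 2 * (4 * a + 1) ≤ c N ^ 2 * (4 * N + 1) := c_sq_mono haN
  have hA : (0 : ℝ) < 4 * a + 1 := by positivity
  have hB : (0 : ℝ) < 4 * N + 1 := by positivity
  have ht : 0 < 1 - 2 * t := by
    by_contra hcon
    have : K ^ 2 * (1 - 2 * t) * (4 * a + 1) ≤ 0 :=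
      mul_nonpos_of_nonpos_of_nonneg
        (mul_nonpos_of_nonneg_of_nonpos (sq_nonneg _) (not_lt.mp hcon)) hA.le
    linarith
  have hN := c_pos N
  have h0 : 0 ≤ c N * K * (1 - t) :=
    mul_nonneg (mul_nonneg hN.le hK) (by linarith)
  refine (sq_le_sq₀ (c_pos a).le h0).mp ?_
  refine le_of_mul_le_mul_right ?_ hA
  calc c a ^ 2 * (4 * a + 1) ≤ c N ^ 2 * (4 * N + 1) := hm
    _ ≤ c N ^ 2 * (K ^ 2 * (1 - 2 * t) * (4 * a + 1)) :=
        mul_le_mul_of_nonneg_left h (sq_nonneg _)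
    _ = (c N * K) ^ 2 * (4 * a + 1) * (1 - 2 * t) := by ring
    _ ≤ (c N * K) ^ 2 * (4 * a + 1) * (1 - t) ^ 2 :=
        mul_le_mul_of_nonneg_left (by nlinarith [sq_nonneg t]) (by positivity)
    _ = (c N * K * (1 - t)) ^ 2 * (4 * a + 1) := by ring

/-! ### Comparison of the probabilities -/

lemma event_of_le {ξ z : ℝ} (hξ0 : 0 < ξ) (hz : ξ ^ 2 * z = 2) (n : ℕ) (L s : ℤ) (hL : 0 ≤ L)
    (h : (L : ℝ) ^ 2 * z ≤ 2 * n) (hs : |s| ≤ L) : |(s : ℝ)| ≤ ξ * Real.sqrt n := by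
  have h1 : |(s : ℝ)| ≤ L := by exact_mod_cast hs
  refine h1.trans ?_
  have hL' : (0 : ℝ) ≤ L := by exact_mod_cast hL
  refine (sq_le_sq₀ hL' (by positivity)).mp ?_
  rw [mul_pow, Real.sq_sqrt (Nat.cast_nonneg n)]
  have := mul_le_mul_of_nonneg_left h (sq_nonneg ξ)
  have e : ξ ^ 2 * ((L : ℝ) ^ 2 * z) = 2 * (L : ℝ) ^ 2 := by linear_combination (L : ℝ) ^ 2 * hz
  linarith

lemma Pxi_le_c {ξ z : ℝ} (hξ0 : 0 < ξ) (hz : ξ ^ 2 * z = 2) (a : ℕ) (ha : (a : ℝ) < z) :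
    Pxi ξ (2 * a) ≤ c a := by
  have h4 : (2 : ℝ) ^ (2 * a) = 4 ^ a := by rw [pow_mul]; norm_num
  rw [c, Nat.centralBinom_eq_two_mul_choose, ← h4]
  refine pr_le_choose _ _ _ fun ε hε => ?_
  have h1 : |(S (2 * a) ε : ℝ)| < 2 := by
    refine lt_of_le_of_lt hε (lt_of_pow_lt_pow_left₀ 2 (by norm_num) ?_)
    rw [mul_pow, Real.sq_sqrt (Nat.cast_nonneg _)]
    push_cast
    have := mul_lt_mul_of_pos_left ha (pow_pos hξ0 2)
    nlinarith
  have h2 : |S (2 * a) ε| < 2 := by exact_mod_cast h1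
  rw [S_eq_numPos, abs_lt] at h2
  omega

lemma even_case {ξ z : ℝ} (hξ0 : 0 < ξ) (hz : ξ ^ 2 * z = 2) (a N : ℕ) (ha1 : 1 ≤ a)
    (ha : (a : ℝ) < z) (ha' : z ≤ a + 1) : c a ≤ Pxi ξ (2 * N) := by
  have ha1' : (1 : ℝ) ≤ a := by exact_mod_cast ha1
  have hz0 : 0 < z := by linarith
  obtain ⟨r, hr1, hr2⟩ : ∃ r : ℕ, (r : ℝ) ^ 2 * z ≤ N ∧ (N : ℝ) < ((r : ℝ) + 1) ^ 2 * z := by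
    refine ⟨⌊Real.sqrt (N / z)⌋₊, ?_, ?_⟩
    · have h := Nat.floor_le (Real.sqrt_nonneg ((N : ℝ) / z))
      rw [← le_div_iff₀ hz0]
      exact (Real.le_sqrt (Nat.cast_nonneg _) (by positivity)).mp h
    · have h := Nat.lt_floor_add_one (Real.sqrt ((N : ℝ) / z))
      rw [← div_lt_iff₀ hz0]
      exact (Real.sqrt_lt' (by positivity)).mp h
  have hlow : (r : ℝ) ^ 2 * a ≤ N :=
    (mul_le_mul_of_nonneg_left ha.le (sq_nonneg _)).trans hr1
  have hupp : (N : ℝ) ≤ ((r : ℝ) + 1) ^ 2 * (a + 1) - 1 := by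
    have h : (N : ℝ) < ((r : ℝ) + 1) ^ 2 * (a + 1) :=
      hr2.trans_le (mul_le_mul_of_nonneg_left ha' (sq_nonneg _))
    have h' : N + 1 ≤ (r + 1) ^ 2 * (a + 1) := by exact_mod_cast h
    have h'' : (N : ℝ) + 1 ≤ ((r : ℝ) + 1) ^ 2 * (a + 1) := by exact_mod_cast h'
    linarith
  have hlowN : r ^ 2 * a ≤ N := by exact_mod_cast hlow
  have hrN : r ≤ N := by nlinarith
  have hP := sum_even_lower N r hrN (fun ε => |(S (2 * N) ε : ℝ)| ≤ ξ * Real.sqrt (2 * N : ℕ))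
    fun ε hε => event_of_le hξ0 hz (2 * N) (2 * r) _ (by positivity)
      (by push_cast; nlinarith) hε
  refine le_trans ?_ hP
  rcases Nat.eq_zero_or_pos r with h0 | h0
  · subst h0
    have : N ≤ a := by
      have : (N : ℝ) ≤ a := by
        norm_num at hupp
        exact_mod_cast hupp
      exact_mod_cast this
    simpa using c_anti this
  · have hr : (1 : ℝ) ≤ r := by exact_mod_cast h0
    exact final_bound a N _ _
      ((Nat.le_mul_of_pos_left a (by positivity)).trans hlowN) (by positivity)
      (poly_even a r N ha1' hr hlow hupp)

lemma odd_case {ξ z : ℝ} (hξ0 : 0 < ξ) (hz : ξ ^ 2 * z = 2) (a N : ℕ) (ha1 : 1 ≤ a)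
    (ha : (a : ℝ) < z) (ha' : z ≤ a + 1) (hN : z ≤ 4 * N + 2) : c a ≤ Pxi ξ (2 * N + 1) := by
  have ha1' : (1 : ℝ) ≤ a := by exact_mod_cast ha1
  have hz0 : 0 < z := by linarith
  obtain ⟨r, hr1, hr2⟩ : ∃ r : ℕ, (2 * (r : ℝ) + 1) ^ 2 * z ≤ 4 * N + 2 ∧
      4 * (N : ℝ) + 2 < (2 * (r : ℝ) + 3) ^ 2 * z := by
    have h1 : 1 ≤ Real.sqrt ((4 * N + 2) / z) := by
      rw [Real.one_le_sqrt, one_le_div hz0]; exact hN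
    refine ⟨⌊(Real.sqrt ((4 * N + 2) / z) - 1) / 2⌋₊, ?_, ?_⟩
    · have h := Nat.floor_le (show 0 ≤ (Real.sqrt ((4 * (N : ℝ) + 2) / z) - 1) / 2 by linarith)
      rw [← le_div_iff₀ hz0]
      exact (Real.le_sqrt (by positivity) (by positivity)).mp (by linarith)
    · have h := Nat.lt_floor_add_one ((Real.sqrt ((4 * (N : ℝ) + 2) / z) - 1) / 2)
      rw [← div_lt_iff₀ hz0]
      exact (Real.sqrt_lt' (by positivity)).mp (by linarith)
  have hlow : (2 * (r : ℝ) + 1) ^ 2 * a ≤ 4 * N + 2 :=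
    (mul_le_mul_of_nonneg_left ha.le (sq_nonneg _)).trans hr1
  have hupp : 4 * (N : ℝ) + 3 ≤ (2 * (r : ℝ) + 3) ^ 2 * (a + 1) := by
    have h : 4 * (N : ℝ) + 2 < (2 * (r : ℝ) + 3) ^ 2 * (a + 1) :=
      hr2.trans_le (mul_le_mul_of_nonneg_left ha' (sq_nonneg _))
    have h' : 4 * N + 2 + 1 ≤ (2 * r + 3) ^ 2 * (a + 1) := by exact_mod_cast h
    exact_mod_cast h'
  have hlowN : (2 * r + 1) ^ 2 * a ≤ 4 * N + 2 := by exact_mod_cast hlow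
  have hrN : r ≤ N := by nlinarith
  have hP := sum_odd_lower N r hrN
    (fun ε => |(S (2 * N + 1) ε : ℝ)| ≤ ξ * Real.sqrt (2 * N + 1 : ℕ))
    fun ε hε => event_of_le hξ0 hz (2 * N + 1) (2 * r + 1) _ (by positivity)
      (by push_cast; linarith) hε
  refine le_trans ?_ hP
  rcases le_or_gt a (N + 1) with haN | haN
  · refine final_bound a (N + 1) _ _ haN (by positivity) ?_
    have := poly_odd a r ((N + 1 : ℕ) : ℝ) ha1' (Nat.cast_nonneg r)
      (by push_cast; linarith) (by push_cast; linarith)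
    exact this
  · have h0 : r = 0 := by
      by_contra hne
      have : 1 ≤ r := Nat.one_le_iff_ne_zero.mpr hne
      have h9 : 3 ^ 2 * a ≤ (2 * r + 1) ^ 2 * a :=
        Nat.mul_le_mul_right a (Nat.pow_le_pow_left (by omega) 2)
      omega
    subst h0
    have := c_anti haN.le
    have := c_pos (N + 1)
    simp
    linarith

/-- For all `n ≥ n₁`, `Q₁⁻ = P_{n₂−1} ≤ Pₙ`. -/
theorem stmt_4 (ξ : ℝ) (hξ0 : 0 < ξ) (hξ1 : ξ ≤ 1) (n : ℕ) (hn : nseq ξ 1 ≤ (n : ℤ)) :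
    Pxi ξ (nseq ξ 2 - 1).toNat ≤ Pxi ξ n := by
  obtain ⟨z, hzdef⟩ : ∃ z, z = 2 / ξ ^ 2 := ⟨_, rfl⟩
  have hz : ξ ^ 2 * z = 2 := by rw [hzdef]; field_simp
  have hz2 : 2 ≤ z := by
    rw [hzdef, le_div_iff₀ (by positivity)]
    nlinarith
  obtain ⟨a, ha⟩ : ∃ a : ℕ, ⌈z⌉ = (a : ℤ) + 1 := by
    have : 0 < ⌈z⌉ := Int.ceil_pos.mpr (by linarith)
    exact ⟨(⌈z⌉ - 1).toNat, by omega⟩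
  have hle : z ≤ a + 1 := by
    have := Int.le_ceil z
    rw [ha] at this; exact_mod_cast this
  have hlt : (a : ℝ) < z := by
    have := Int.ceil_lt_add_one z
    rw [ha] at this; push_cast at this; linarith
  have ha1 : 1 ≤ a := by
    have : (1 : ℝ) ≤ a := by linarith
    exact_mod_cast this
  have h2 : (nseq ξ 2 - 1).toNat = 2 * a := by
    have e : (((2 : ℕ) : ℝ) ^ 2 / ξ ^ 2 + ((2 : ℕ) : ℝ)) / 2 = z + 1 := by
      rw [hzdef]; push_cast; ring
    unfold nseq
    rw [e, Int.ceil_add_one, ha]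
    push_cast
    omega
  rw [h2]
  refine (Pxi_le_c hξ0 hz a hlt).trans ?_
  rcases Nat.even_or_odd' n with ⟨N, rfl | rfl⟩
  · exact even_case hξ0 hz a N ha1 hlt hle
  · refine odd_case hξ0 hz a N ha1 hlt hle ?_
    -- `n ≥ n₁` with `n` odd gives `n ≥ n₁ + 1 ≥ 1/ξ² = z/2`, since `n₁` is even
    have h3 := Int.le_ceil ((((1 : ℕ) : ℝ) ^ 2 / ξ ^ 2 + ((1 : ℕ) : ℝ)) / 2)
    unfold nseq at hn
    have h4 : ⌈(((1 : ℕ) : ℝ) ^ 2 / ξ ^ 2 + ((1 : ℕ) : ℝ)) / 2⌉ ≤ (N : ℤ) + 1 := by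
      push_cast at hn ⊢
      omega
    have h5 : ((⌈(((1 : ℕ) : ℝ) ^ 2 / ξ ^ 2 + ((1 : ℕ) : ℝ)) / 2⌉ : ℤ) : ℝ) ≤ (N : ℝ) + 1 := by
      exact_mod_cast h4
    have e : (((1 : ℕ) : ℝ) ^ 2 / ξ ^ 2 + ((1 : ℕ) : ℝ)) / 2 = z / 4 + 1 / 2 := by
      rw [hzdef]; push_cast; ring
    rw [e] at h3 h5
    linarith
end

section
/- For every n ≥ 2: if ξ = 1 then P(|Sₙ| ≤ ξ·√n) ≥ 1/2; if ξ ∈ [√(2/3), 1) then P(|Sₙ| ≤ ξ·√n) ≥ 3/8; and if ξ ∈ [√(1/2), √(2/3)) then P(|Sₙ| ≤ ξ·√n) ≥ 5/16. -/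
/-! ### Reduction to binomial coefficients -/

theorem S_eq_card (n : ℕ) (ε : Fin n → Bool) :
    S n ε = 2 * ((Finset.univ.filter fun i => ε i = true).card : ℤ) - n := by
  have h : ∀ i : Fin n, (if ε i then (1 : ℤ) else -1) = 2 * (if ε i = true then 1 else 0) - 1 := by
    intro i; split_ifs <;> norm_num
  unfold S
  rw [Finset.sum_congr rfl fun i _ => h i, Finset.sum_sub_distrib, ← Finset.mul_sum]
  simp

theorem card_signs (n j : ℕ) :
    (Finset.univ.filter fun ε : Fin n → Bool =>
      (Finset.univ.filter fun i => ε i = true).card = j).card = n.choose j := by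
  have h : (Finset.powersetCard j (Finset.univ : Finset (Fin n))).card = n.choose j := by
    rw [Finset.card_powersetCard, Finset.card_univ, Fintype.card_fin]
  rw [← h]
  refine Finset.card_nbij' (fun ε => Finset.univ.filter fun i => ε i = true)
    (fun s i => decide (i ∈ s)) ?_ ?_ ?_ ?_
  · intro ε hε
    simpa [Finset.mem_powersetCard] using hε
  · intro s hs
    simpa [Finset.mem_powersetCard] using hs
  · intro ε _
    funext i
    simp
  · intro s _
    ext i
    simp

/-- The event `|Sₙ| ≤ k` with `n = 2a + k` says that the number of plus signs lies between
`a` and `a + k`. -/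
theorem Pxi_ge_sum (ξ : ℝ) (n a k : ℕ) (hn : n = 2 * a + k) (hk : (k : ℝ) ≤ ξ * Real.sqrt n) :
    (∑ i ∈ Finset.range (k + 1), ((n.choose (a + i) : ℕ) : ℝ)) / 2 ^ n ≤ Pxi ξ n := by
  classical
  unfold Pxi pr
  gcongr
  rw [← Nat.cast_sum, Nat.cast_le]
  rw [Finset.sum_congr rfl fun i _ => (card_signs n (a + i)).symm, ← Finset.card_biUnion]
  · apply Finset.card_le_card
    intro ε hε
    simp only [Finset.mem_biUnion, Finset.mem_range, Finset.mem_filter, Finset.mem_univ,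
      true_and] at hε ⊢
    obtain ⟨i, hi, hc⟩ := hε
    have hS : |S n ε| ≤ (k : ℤ) := by
      rw [S_eq_card, hc, abs_le]
      constructor <;> push_cast <;> omega
    refine le_trans ?_ hk
    exact_mod_cast hS
  · intro i _ j _ hij
    rw [Function.onFun, Finset.disjoint_left]
    intro ε h1 h2
    simp only [Finset.mem_filter, Finset.mem_univ, true_and] at h1 h2
    omega

/-! ### Estimates for binomial coefficients -/

/-- The successive ratios are `(w - y) / (w + y)` with `w = n + 1` and `y = 2i - n + 1`, and
`(2w - (y-1)²)(w - y) - (2w - (y+1)²)(w + y) = 2y(y² + 1)`. -/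
theorem choose_ge_upper (n j : ℕ) (hj : n / 2 + j ≤ n) :
    (n.choose (n / 2) : ℝ) * (1 - (2 * ((n / 2 + j : ℕ) : ℝ) - n) ^ 2 / (2 * (n + 1)))
      ≤ (n.choose (n / 2 + j) : ℝ) := by
  induction j with
  | zero =>
    have h0 : (0 : ℝ) ≤ n.choose (n / 2) := by positivity
    have : (0 : ℝ) ≤ (2 * ((n / 2 + 0 : ℕ) : ℝ) - n) ^ 2 / (2 * (n + 1)) := by positivity
    simp only [Nat.add_zero] at this ⊢
    nlinarith
  | succ j ih =>
    have ih := ih (by omega)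
    set i := n / 2 + j with hi
    have hi1 : i + 1 ≤ n := by omega
    have hrec : ((n.choose (i + 1) : ℕ) : ℝ) * (i + 1) = n.choose i * (n - i) := by
      have := Nat.choose_succ_right_eq n i
      have h2 : ((n - i : ℕ) : ℝ) = n - i := by rw [Nat.cast_sub (by omega)]
      rw [← h2]; exact_mod_cast this
    have hni : (0 : ℝ) ≤ n - i := by
      have : (i : ℝ) + 1 ≤ n := by exact_mod_cast hi1
      linarith
    have hy : (0 : ℝ) ≤ 2 * i - n + 1 := by
      have : n ≤ 2 * i + 1 := by omega
      have : (n : ℝ) ≤ 2 * i + 1 := by exact_mod_cast this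
      linarith
    have h0 : (0 : ℝ) ≤ n.choose (n / 2) := by positivity
    have hw : (0 : ℝ) < 2 * (n + 1) := by positivity
    have hip : (0 : ℝ) < (i : ℝ) + 1 := by positivity
    have e : ((n / 2 + (j + 1) : ℕ) : ℝ) = i + 1 := by rw [hi]; push_cast; ring
    rw [e, show n / 2 + (j + 1) = i + 1 by omega]
    refine le_of_mul_le_mul_right ?_ hip
    rw [hrec]
    refine le_trans ?_ (mul_le_mul_of_nonneg_right ih hni)
    rw [mul_assoc, mul_assoc]
    refine mul_le_mul_of_nonneg_left ?_ h0
    rw [one_sub_div hw.ne', one_sub_div hw.ne', div_mul_eq_mul_div, div_mul_eq_mul_div]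
    refine div_le_div_of_nonneg_right ?_ hw.le
    obtain ⟨y, hyd⟩ : ∃ y : ℝ, y = 2 * i - n + 1 := ⟨_, rfl⟩
    rw [← hyd] at hy
    have en : (n : ℝ) = 2 * i + 1 - y := by linarith
    have : 0 ≤ y * (y ^ 2 + 1) := by positivity
    rw [en]
    nlinarith

theorem choose_ge (n i : ℕ) (hi : i ≤ n) :
    (n.choose (n / 2) : ℝ) * (1 - (2 * (i : ℝ) - n) ^ 2 / (2 * (n + 1))) ≤ (n.choose i : ℝ) := by
  rcases le_total (n / 2) i with h | h
  · obtain ⟨j, rfl⟩ := Nat.exists_eq_add_of_le h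
    exact choose_ge_upper n j hi
  · obtain ⟨j, hj⟩ := Nat.exists_eq_add_of_le (show n / 2 ≤ n - i by omega)
    have := choose_ge_upper n j (by omega)
    rw [← hj, Nat.choose_symm hi, Nat.cast_sub hi] at this
    convert this using 4
    ring

theorem sum_sq_centered (k : ℕ) (x : ℝ) :
    ∑ i ∈ Finset.range (k + 1), (2 * (i : ℝ) - x) ^ 2
      = (k + 1) * (2 * k * (2 * k + 1) / 3 - 2 * k * x + x ^ 2) := by
  induction k with
  | zero => simp
  | succ k ih => rw [Finset.sum_range_succ, ih]; push_cast; ring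

theorem sum_choose_ge (n a k : ℕ) (hn : n = 2 * a + k) :
    (n.choose (n / 2) : ℝ) * ((k + 1) * (1 - ((k + 1 : ℝ) ^ 2 - 1) / 6 / (n + 1)))
      ≤ ∑ i ∈ Finset.range (k + 1), ((n.choose (a + i) : ℕ) : ℝ) := by
  have h : ∀ i ∈ Finset.range (k + 1),
      (n.choose (n / 2) : ℝ) * (1 - (2 * (i : ℝ) - k) ^ 2 / (2 * (n + 1)))
        ≤ ((n.choose (a + i) : ℕ) : ℝ) := by
    intro i hi
    rw [Finset.mem_range] at hi
    have := choose_ge n (a + i) (by omega)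
    have e : 2 * ((a + i : ℕ) : ℝ) - n = 2 * (i : ℝ) - k := by rw [hn]; push_cast; ring
    rwa [e] at this
  refine le_trans (le_of_eq ?_) (Finset.sum_le_sum h)
  rw [← Finset.mul_sum, Finset.sum_sub_distrib, ← Finset.sum_div, sum_sq_centered]
  have : (n : ℝ) + 1 ≠ 0 := by positivity
  simp only [Finset.sum_const, Finset.card_range, nsmul_eq_mul]
  push_cast
  field_simp
  ring

/-- The constant is the value of `m · (C(2m, m) / 4ᵐ)²` at `m = 4`. -/
theorem centralBinom_sq (m : ℕ) (hm : 4 ≤ m) :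
    (1225 / 4096 : ℝ) * 16 ^ m ≤ m * (m.centralBinom : ℝ) ^ 2 := by
  induction m, hm using Nat.le_induction with
  | base => norm_num [Nat.centralBinom, Nat.choose]
  | succ m hm ih =>
    have h : ((m : ℝ) + 1) * ((m + 1).centralBinom : ℝ) = 2 * (2 * m + 1) * m.centralBinom := by
      exact_mod_cast Nat.succ_mul_centralBinom_succ m
    have hp : (0 : ℝ) < (m : ℝ) + 1 := by positivity
    refine le_of_mul_le_mul_left ?_ hp
    have e : ((m : ℝ) + 1) * (((m + 1 : ℕ) : ℝ) * ((m + 1).centralBinom : ℝ) ^ 2)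
        = (2 * (2 * m + 1) * m.centralBinom) ^ 2 := by
      rw [← h]; push_cast; ring
    rw [e, pow_succ]
    have : ((m : ℝ) + 1) * (1225 / 4096 * (16 ^ m * 16))
        ≤ ((m : ℝ) + 1) * 16 * (m * (m.centralBinom : ℝ) ^ 2) := by nlinarith
    nlinarith [sq_nonneg (m.centralBinom : ℝ)]

theorem central_sq (n : ℕ) (hn : 7 ≤ n) :
    (1225 / 2048 : ℝ) / (n + 1) ≤ ((n.choose (n / 2) : ℝ) / 2 ^ n) ^ 2 := by
  rw [div_pow, div_le_div_iff₀ (by positivity) (by positivity)]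
  obtain ⟨m, rfl | rfl⟩ : ∃ m, n = 2 * m ∨ n = 2 * m + 1 := ⟨n / 2, by omega⟩
  · have h := centralBinom_sq m (by omega)
    rw [Nat.centralBinom] at h
    rw [show 2 * m / 2 = m by omega, ← pow_mul, show 2 * m * 2 = 4 * m by ring, pow_mul]
    norm_num
    nlinarith [sq_nonneg ((2 * m).choose m : ℝ)]
  · have h := centralBinom_sq (m + 1) (by omega)
    have e : ((m + 1).centralBinom : ℝ) = 2 * ((2 * m + 1).choose m : ℝ) := by
      have : (m + 1).centralBinom = 2 * (2 * m + 1).choose m := by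
        rw [Nat.centralBinom, show 2 * (m + 1) = 2 * m + 1 + 1 by ring, Nat.choose_succ_succ,
          Nat.choose_symm_half]
        ring
      exact_mod_cast this
    rw [e] at h
    rw [show (2 * m + 1) / 2 = m by omega, ← pow_mul,
      show (2 * m + 1) * 2 = 4 * m + 2 by ring, pow_add, pow_mul]
    rw [pow_succ] at h
    push_cast at h ⊢
    norm_num
    nlinarith

/-! ### Assembling the bound -/

/-- The function `u ↦ u (1 - b u)²` is nondecreasing for `0 ≤ b u ≤ 1/3`; here `u = 1 / w`, so
`w` may be replaced by its largest value `W`. -/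
theorem numeric_bound {N w W p T : ℝ} (hN : 2 ≤ N) (hw : 0 < w) (hwW : w ≤ W)
    (hb : N ^ 2 - 1 ≤ 2 * w) (hp : 0 ≤ p) (hpw : 1225 / 2048 / w ≤ p ^ 2)
    (hT : T ^ 2 * (36 * W ^ 3) ≤ 1225 / 2048 * N ^ 2 * (6 * W - (N ^ 2 - 1)) ^ 2) :
    T ≤ p * (N * (1 - (N ^ 2 - 1) / 6 / w)) := by
  have hW : 0 < W := hw.trans_le hwW
  obtain ⟨b, hbd⟩ : ∃ b, b = (N ^ 2 - 1) / 6 := ⟨_, rfl⟩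
  have hb0 : 0 ≤ b := by rw [hbd]; nlinarith
  have hb3 : 3 * b ≤ w := by rw [hbd]; linarith
  rw [← hbd]
  have hx : b / w ≤ 1 / 3 := by rw [div_le_div_iff₀ hw (by norm_num)]; linarith
  have hmono : (1 - b / W) ^ 2 / W ≤ (1 - b / w) ^ 2 / w := by
    have e1 : b / w = b * w⁻¹ := div_eq_mul_inv _ _
    obtain ⟨u, hu⟩ : ∃ u, u = w⁻¹ := ⟨_, rfl⟩
    obtain ⟨v, hv⟩ : ∃ v, v = W⁻¹ := ⟨_, rfl⟩
    have hv0 : 0 ≤ v := by rw [hv]; positivity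
    have hvu : v ≤ u := by rw [hu, hv]; gcongr
    have hbu : b * u ≤ 1 / 3 := by rw [hu, ← e1]; exact hx
    have hbv : b * v ≤ 1 / 3 := (mul_le_mul_of_nonneg_left hvu hb0).trans hbu
    rw [div_eq_mul_inv, div_eq_mul_inv, div_eq_mul_inv, div_eq_mul_inv, ← hu, ← hv]
    have hfac : 0 ≤ 1 - 2 * (b * u + b * v)
        + ((b * u) ^ 2 + (b * u) * (b * v) + (b * v) ^ 2) := by
      have h1 : 0 ≤ 1 / 3 - b * u := by linarith
      have h2 : 0 ≤ 1 / 3 - b * v := by linarith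
      nlinarith [mul_nonneg h1 h2, sq_nonneg (1 / 3 - b * u), sq_nonneg (1 / 3 - b * v)]
    have := mul_nonneg (sub_nonneg.2 hvu) hfac
    nlinarith
  have hTW : T ^ 2 ≤ 1225 / 2048 * N ^ 2 * ((1 - b / W) ^ 2 / W) := by
    have e : 1225 / 2048 * N ^ 2 * ((1 - b / W) ^ 2 / W)
        = 1225 / 2048 * N ^ 2 * (6 * W - (N ^ 2 - 1)) ^ 2 / (36 * W ^ 3) := by
      rw [hbd]; field_simp; ring
    rw [e, le_div_iff₀ (by positivity)]
    exact hT
  have hpos : 0 ≤ p * (N * (1 - b / w)) :=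
    mul_nonneg hp (mul_nonneg (by linarith) (by linarith))
  refine (le_abs_self T).trans (abs_le_of_sq_le_sq ?_ hpos)
  calc T ^ 2 ≤ 1225 / 2048 * N ^ 2 * ((1 - b / W) ^ 2 / W) := hTW
    _ ≤ 1225 / 2048 * N ^ 2 * ((1 - b / w) ^ 2 / w) := by gcongr
    _ = 1225 / 2048 / w * (N * (1 - b / w)) ^ 2 := by ring
    _ ≤ p ^ 2 * (N * (1 - b / w)) ^ 2 := by gcongr
    _ = (p * (N * (1 - b / w))) ^ 2 := by ring

theorem exists_threshold (n m : ℕ) (hm : 1 ≤ m) (hmn : m ≤ n) :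
    ∃ a k, n = 2 * a + k ∧ k ^ 2 ≤ m ∧ m < (k + 2) ^ 2 := by
  have h1 := Nat.sqrt_le' m
  have h2 := Nat.lt_succ_sqrt' m
  have h3 : 1 ≤ m.sqrt := Nat.sqrt_pos.2 hm
  have h4 : m.sqrt ≤ n := (Nat.sqrt_le_self m).trans hmn
  obtain ⟨s, hs⟩ : ∃ s, m.sqrt = s + 1 := ⟨m.sqrt - 1, by omega⟩
  rw [hs] at h1 h2 h4
  rw [Nat.succ_eq_add_one] at h2
  by_cases hp : (n - (s + 1)) % 2 = 0
  · exact ⟨(n - (s + 1)) / 2, s + 1, by omega, h1, by nlinarith⟩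
  · exact ⟨(n - s) / 2, s, by omega, by nlinarith, by nlinarith⟩

theorem threshold_le {ξ : ℝ} (hξ : 0 ≤ ξ) {n k : ℕ} (h : (k : ℝ) ^ 2 ≤ ξ ^ 2 * n) :
    (k : ℝ) ≤ ξ * Real.sqrt n := by
  refine (le_abs_self _).trans (abs_le_of_sq_le_sq ?_ (by positivity))
  rwa [mul_pow, Real.sq_sqrt (Nat.cast_nonneg n)]

theorem large_bound {ξ T W : ℝ} (hξ : 0 ≤ ξ) {n a k : ℕ} (hn : 7 ≤ n) (hna : n = 2 * a + k)
    (hk : 1 ≤ k) (hkn : k ^ 2 ≤ n) (hkξ : (k : ℝ) ^ 2 ≤ ξ ^ 2 * n) (hW : (n : ℝ) + 1 ≤ W)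
    (hT : T ^ 2 * (36 * W ^ 3)
      ≤ 1225 / 2048 * (k + 1 : ℝ) ^ 2 * (6 * W - ((k + 1 : ℝ) ^ 2 - 1)) ^ 2) :
    T ≤ Pxi ξ n := by
  refine le_trans ?_ (Pxi_ge_sum ξ n a k hna (threshold_le hξ hkξ))
  have h1 : (1 : ℝ) ≤ k := by exact_mod_cast hk
  have h2 : (k : ℝ) ^ 2 ≤ n := by exact_mod_cast hkn
  have h := numeric_bound (N := k + 1) (w := n + 1) (by linarith) (by positivity) hW
    (by nlinarith [sq_nonneg ((k : ℝ) - 1)]) (by positivity) (central_sq n hn) hT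
  refine h.trans ?_
  rw [div_mul_eq_mul_div]
  exact div_le_div_of_nonneg_right (sum_choose_ge n a k hna) (by positivity)

theorem bound_one {ξ : ℝ} (hξ : 0 ≤ ξ) (hc : 1 ≤ ξ ^ 2) (n : ℕ) (hn : 7 ≤ n) :
    1 / 2 ≤ Pxi ξ n := by
  obtain ⟨a, k, hna, h1, h2⟩ := exists_threshold n n (by omega) le_rfl
  have hk : 1 ≤ k := by
    rcases Nat.eq_zero_or_pos k with rfl | h
    · omega
    · exact h
  -- `n` and `(k + 2)²` have the same parity, so `n < (k + 2)²` improves to `n + 2 ≤ (k + 2)²`.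
  have hpar : n + 2 ≤ (k + 2) ^ 2 := by
    obtain ⟨t, ht⟩ := Nat.even_mul_succ_self k
    have : (k + 2) ^ 2 = k * (k + 1) + 3 * k + 4 := by ring
    omega
  have hpar' : (n : ℝ) + 2 ≤ (k + 2) ^ 2 := by exact_mod_cast hpar
  have h1' : (k : ℝ) ^ 2 ≤ n := by exact_mod_cast h1
  refine large_bound (W := (k + 1) * (k + 3)) hξ hn hna hk h1 (by nlinarith) (by nlinarith) ?_
  obtain ⟨x, rfl⟩ := Nat.exists_eq_add_of_le hk
  push_cast
  rw [← sub_nonneg]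
  ring_nf
  positivity

theorem bound_two_thirds {ξ : ℝ} (hξ : 0 ≤ ξ) (hc : 2 / 3 ≤ ξ ^ 2) (n : ℕ) (hn : 7 ≤ n) :
    3 / 8 ≤ Pxi ξ n := by
  obtain ⟨a, k, hna, h1, h2⟩ := exists_threshold n (2 * n / 3) (by omega) (by omega)
  have hk : 1 ≤ k := by
    rcases Nat.eq_zero_or_pos k with rfl | h
    · omega
    · exact h
  have h3 : 2 * n + 1 ≤ 3 * (k + 2) ^ 2 := by omega
  have h3' : 2 * (n : ℝ) + 1 ≤ 3 * (k + 2) ^ 2 := by exact_mod_cast h3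
  have h4 : 3 * k ^ 2 ≤ 2 * n := by omega
  have h4' : 3 * (k : ℝ) ^ 2 ≤ 2 * n := by exact_mod_cast h4
  have hn0 : (0 : ℝ) ≤ n := by positivity
  refine large_bound (W := (3 * (k + 2) ^ 2 + 1) / 2) hξ hn hna hk (by omega) (by nlinarith)
    (by linarith) ?_
  obtain ⟨x, rfl⟩ := Nat.exists_eq_add_of_le hk
  push_cast
  rw [← sub_nonneg]
  ring_nf
  positivity

theorem bound_half {ξ : ℝ} (hξ : 0 ≤ ξ) (hc : 1 / 2 ≤ ξ ^ 2) (n : ℕ) (hn : 7 ≤ n) :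
    5 / 16 ≤ Pxi ξ n := by
  obtain ⟨a, k, hna, h1, h2⟩ := exists_threshold n (n / 2) (by omega) (by omega)
  have hk : 1 ≤ k := by
    rcases Nat.eq_zero_or_pos k with rfl | h
    · omega
    · exact h
  have h3 : n + 1 ≤ 2 * (k + 2) ^ 2 := by omega
  have h3' : (n : ℝ) + 1 ≤ 2 * (k + 2) ^ 2 := by exact_mod_cast h3
  have h4 : 2 * k ^ 2 ≤ n := by omega
  have h4' : 2 * (k : ℝ) ^ 2 ≤ n := by exact_mod_cast h4
  have hn0 : (0 : ℝ) ≤ n := by positivity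
  refine large_bound (W := 2 * (k + 2) ^ 2) hξ hn hna hk (by omega) (by nlinarith) h3' ?_
  obtain ⟨x, rfl⟩ := Nat.exists_eq_add_of_le hk
  push_cast
  rw [← sub_nonneg]
  ring_nf
  positivity

theorem small_bound {ξ T : ℝ} (hξ : 0 ≤ ξ) (n a k : ℕ) (hna : n = 2 * a + k)
    (hkξ : (k : ℝ) ^ 2 ≤ ξ ^ 2 * n)
    (hT : T ≤ (∑ i ∈ Finset.range (k + 1), ((n.choose (a + i) : ℕ) : ℝ)) / 2 ^ n) :
    T ≤ Pxi ξ n :=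
  hT.trans (Pxi_ge_sum ξ n a k hna (threshold_le hξ hkξ))

/-- lower bounds `1/2`, `3/8`, `5/16` for `P(|Sₙ| ≤ ξ√n)`, `n ≥ 2`,
according to the range of `ξ`. -/
theorem stmt_5 (ξ : ℝ) (n : ℕ) (hn : 2 ≤ n) :
    (ξ = 1 → 1 / 2 ≤ Pxi ξ n) ∧
    (Real.sqrt (2 / 3) ≤ ξ → ξ < 1 → 3 / 8 ≤ Pxi ξ n) ∧
    (Real.sqrt (1 / 2) ≤ ξ → ξ < Real.sqrt (2 / 3) → 5 / 16 ≤ Pxi ξ n) := by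
  refine ⟨fun hξ => ?_, fun hξ _ => ?_, fun hξ _ => ?_⟩
  · have h0 : 0 ≤ ξ := by rw [hξ]; norm_num
    have hc : 1 ≤ ξ ^ 2 := by rw [hξ]; norm_num
    rcases le_or_gt 7 n with h | h
    · exact bound_one h0 hc n h
    · interval_cases n
      · exact small_bound h0 2 1 0 rfl (by push_cast; linarith)
          (by norm_num [Finset.sum_range_succ, Nat.choose])
      · exact small_bound h0 3 1 1 rfl (by push_cast; linarith)
          (by norm_num [Finset.sum_range_succ, Nat.choose])
      · exact small_bound h0 4 1 2 rfl (by push_cast; linarith)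
          (by norm_num [Finset.sum_range_succ, Nat.choose])
      · exact small_bound h0 5 2 1 rfl (by push_cast; linarith)
          (by norm_num [Finset.sum_range_succ, Nat.choose])
      · exact small_bound h0 6 2 2 rfl (by push_cast; linarith)
          (by norm_num [Finset.sum_range_succ, Nat.choose])
  · obtain ⟨h0, hc⟩ := Real.sqrt_le_iff.1 hξ
    rcases le_or_gt 7 n with h | h
    · exact bound_two_thirds h0 hc n h
    · interval_cases n
      · exact small_bound h0 2 1 0 rfl (by push_cast; linarith)
          (by norm_num [Finset.sum_range_succ, Nat.choose])
      · exact small_bound h0 3 1 1 rfl (by push_cast; linarith)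
          (by norm_num [Finset.sum_range_succ, Nat.choose])
      · exact small_bound h0 4 2 0 rfl (by push_cast; linarith)
          (by norm_num [Finset.sum_range_succ, Nat.choose])
      · exact small_bound h0 5 2 1 rfl (by push_cast; linarith)
          (by norm_num [Finset.sum_range_succ, Nat.choose])
      · exact small_bound h0 6 2 2 rfl (by push_cast; linarith)
          (by norm_num [Finset.sum_range_succ, Nat.choose])
  · obtain ⟨h0, hc⟩ := Real.sqrt_le_iff.1 hξ
    rcases le_or_gt 7 n with h | h
    · exact bound_half h0 hc n h
    · interval_cases n
      · exact small_bound h0 2 1 0 rfl (by push_cast; linarith)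
          (by norm_num [Finset.sum_range_succ, Nat.choose])
      · exact small_bound h0 3 1 1 rfl (by push_cast; linarith)
          (by norm_num [Finset.sum_range_succ, Nat.choose])
      · exact small_bound h0 4 2 0 rfl (by push_cast; linarith)
          (by norm_num [Finset.sum_range_succ, Nat.choose])
      · exact small_bound h0 5 2 1 rfl (by push_cast; linarith)
          (by norm_num [Finset.sum_range_succ, Nat.choose])
      · exact small_bound h0 6 3 0 rfl (by push_cast; linarith)
          (by norm_num [Finset.sum_range_succ, Nat.choose])
end

section
/- Suppose 0 < ξ ≤ 1 and n₂ ≥ 3 with n₂ odd. Then 2/√(n₂+1) ≤ ξ < 2/√(n₂−1), n₁ = 2·⌈(n₂−3)/8⌉, and for all n ≥ n₁ one has P(|Sₙ| ≤ ξ·√n) ≥ P_{n₂−1} = C(n₂−1, (n₂−1)/2)·2^(−(n₂−1)). -/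
namespace Rademacher

open Finset

/-! ### Sign vectors and binomial coefficients -/

theorem S_eq (n : ℕ) (ε : Fin n → Bool) :
    S n ε = 2 * ((univ.filter fun i => ε i = true).card : ℤ) - n := by
  have h : ∀ i : Fin n, (if ε i then (1 : ℤ) else -1) = 2 * (if ε i = true then 1 else 0) - 1 := by
    intro i; split_ifs <;> norm_num
  unfold S
  rw [sum_congr rfl fun i _ => h i, sum_sub_distrib, ← mul_sum, sum_boole]
  simp

/-- Sign vectors with exactly `l` entries `+1` correspond to `l`-subsets of `Fin n`. -/
theorem card_signs (n l : ℕ) :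
    (univ.filter fun ε : Fin n → Bool => (univ.filter fun i => ε i = true).card = l).card
      = n.choose l := by
  have h : n.choose l = ((univ : Finset (Fin n)).powersetCard l).card := by simp
  rw [h]
  refine card_nbij' (fun ε => univ.filter fun i => ε i = true) (fun s i => decide (i ∈ s))
    ?_ ?_ ?_ ?_
  · intro ε hε; simpa using hε
  · intro s hs; simpa using hs
  · intro ε _; ext i; simp
  · intro s _; ext i; simp

theorem pr_mono {n : ℕ} {E F : (Fin n → Bool) → Prop} (h : ∀ ε, E ε → F ε) : pr n E ≤ pr n F := by
  classical
  unfold pr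
  refine div_le_div_of_nonneg_right ?_ (by positivity)
  exact_mod_cast card_le_card (monotone_filter_right _ fun ε _ => h ε)

theorem pr_eq_zero {n : ℕ} {E : (Fin n → Bool) → Prop} (h : ∀ ε, ¬ E ε) : pr n E = 0 := by
  unfold pr
  simp [h]

theorem pr_congr {n : ℕ} {E F : (Fin n → Bool) → Prop} (h : ∀ ε, E ε ↔ F ε) : pr n E = pr n F := by
  rw [show E = F from funext fun ε => propext (h ε)]

theorem pr_or {n : ℕ} {E F : (Fin n → Bool) → Prop} (h : ∀ ε, E ε → ¬ F ε) :
    pr n (fun ε => E ε ∨ F ε) = pr n E + pr n F := by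
  classical
  unfold pr
  rw [← add_div, ← Nat.cast_add, ← card_union_of_disjoint]
  · congr 2
    rw [← filter_or]
    congr
  · exact disjoint_filter.2 fun ε _ => h ε

theorem prEq_choose (n l : ℕ) : prEq n (2 * l - n) = (n.choose l : ℝ) / 2 ^ n := by
  unfold prEq pr
  rw [← card_signs]
  congr 3
  ext ε
  simp only [mem_filter, S_eq]
  constructor
  · rintro ⟨h, h'⟩; exact ⟨h, by omega⟩
  · rintro ⟨h, h'⟩; exact ⟨h, by omega⟩

theorem prEq_neg (n l : ℕ) (hl : l ≤ n) : prEq n (-(2 * l - n)) = (n.choose l : ℝ) / 2 ^ n := by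
  have := prEq_choose n (n - l)
  rw [Nat.choose_symm hl] at this
  rw [← this]; congr 1; push_cast [hl]; ring

/-- Raising the threshold by one parity step adds the two atoms at `±(2l - n)`. For `l > n` both the
atoms and the binomial coefficient vanish. -/
theorem P_step (n : ℕ) (l : ℕ) (h1 : n < 2 * l) :
    P n (2 * l - n) = P n (2 * l - n - 2) + 2 * ((n.choose l : ℝ) / 2 ^ n) := by
  have key : P n (2 * l - n) = pr n fun ε => (|S n ε| ≤ 2 * l - n - 2) ∨
      (S n ε = 2 * l - n ∨ S n ε = -(2 * l - n)) := by
    refine pr_congr fun ε => ?_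
    rw [S_eq]
    grind
  rw [key, pr_or, pr_or]
  · rcases le_or_gt l n with hl | hl
    · have a := prEq_choose n l
      have b := prEq_neg n l hl
      unfold prEq at a b
      rw [a, b]; unfold P; ring
    · have z : ∀ j : ℤ, (n : ℤ) < |j| → pr n (fun ε => S n ε = j) = 0 := by
        intro j hj
        refine pr_eq_zero fun ε h => ?_
        have : (univ.filter fun i => ε i = true).card ≤ n := by
          simpa using card_le_univ (univ.filter fun i => ε i = true)
        rw [S_eq] at h
        grind
      rw [z, z, Nat.choose_eq_zero_of_lt hl]
      · simp [P]
      · grind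
      · grind
  · intro ε h h'; omega
  · intro ε h h'; grind

/-! ### Interval probabilities as binomial sums -/

/-- The number of sign vectors of length `2h` with `|S| ≤ 2r`, as a binomial sum (see `P_even`). -/
noncomputable def f (h r : ℕ) : ℝ :=
  (2 * h).choose h + 2 * ∑ l ∈ range r, ((2 * h).choose (h + l + 1) : ℝ)

/-- The number of sign vectors of length `2h + 1` with `|S| ≤ 2r - 1`, as a binomial sum
(see `P_odd`). -/
noncomputable def g (h r : ℕ) : ℝ := 2 * ∑ l ∈ range r, ((2 * h + 1).choose (h + 1 + l) : ℝ)

theorem P_even (h r : ℕ) : P (2 * h) (2 * r) = f h r / 2 ^ (2 * h) := by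
  induction r with
  | zero =>
    have := prEq_choose (2 * h) h
    simp only [f, range_zero, sum_empty, mul_zero, add_zero]
    rw [← this]
    refine pr_congr fun ε => ?_
    push_cast
    simp
  | succ r ih =>
    have := P_step (2 * h) (h + r + 1) (by omega)
    rw [show (2 * ((h + r + 1 : ℕ) : ℤ) - (2 * h : ℕ)) = 2 * ((r + 1 : ℕ) : ℤ) by push_cast; ring,
      show 2 * ((r + 1 : ℕ) : ℤ) - 2 = 2 * r by push_cast; ring, ih] at this
    rw [this, f, f, sum_range_succ]; ring

theorem P_odd (h r : ℕ) : P (2 * h + 1) (2 * r - 1) = g h r / 2 ^ (2 * h + 1) := by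
  induction r with
  | zero =>
    simp only [g, range_zero, sum_empty, mul_zero, zero_div]
    refine pr_eq_zero fun ε hε => ?_
    have := abs_nonneg (S (2 * h + 1) ε)
    omega
  | succ r ih =>
    have := P_step (2 * h + 1) (h + 1 + r) (by omega)
    rw [show (2 * ((h + 1 + r : ℕ) : ℤ) - (2 * h + 1 : ℕ)) = 2 * ((r + 1 : ℕ) : ℤ) - 1 by
        push_cast; ring,
      show 2 * ((r + 1 : ℕ) : ℤ) - 1 - 2 = 2 * r - 1 by push_cast; ring, ih] at this
    rw [this, g, g, sum_range_succ]; ring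

/-! ### Unimodality and monotonicity in time -/

theorem even_ratio (h l : ℕ) : ((2 * h).choose (h + l + 1) : ℝ) * (h + l + 1)
    = (2 * h).choose (h + l) * (h - l) := by
  rcases le_or_gt l h with hl | hl
  · have := Nat.choose_succ_right_eq (2 * h) (h + l)
    rw [show 2 * h - (h + l) = h - l by omega] at this
    have t := congrArg (Nat.cast : ℕ → ℝ) this
    push_cast [hl] at t
    exact t
  · rw [Nat.choose_eq_zero_of_lt (by omega), Nat.choose_eq_zero_of_lt (by omega)]; simp

theorem odd_ratio (h l : ℕ) : ((2 * h + 1).choose (h + 1 + (l + 1)) : ℝ) * (h + l + 2)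
    = (2 * h + 1).choose (h + 1 + l) * (h - l) := by
  rcases le_or_gt l h with hl | hl
  · have := Nat.choose_succ_right_eq (2 * h + 1) (h + 1 + l)
    rw [show 2 * h + 1 - (h + 1 + l) = h - l by omega] at this
    have t := congrArg (Nat.cast : ℕ → ℝ) this
    push_cast [hl] at t
    rw [show h + 1 + (l + 1) = h + 1 + l + 1 by ring]
    linarith
  · rw [Nat.choose_eq_zero_of_lt (by omega), Nat.choose_eq_zero_of_lt (by omega)]; simp

theorem even_anti (h l : ℕ) : ((2 * h).choose (h + l + 1) : ℝ) ≤ (2 * h).choose (h + l) := by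
  have := even_ratio h l
  have p : (0 : ℝ) ≤ (2 * h).choose (h + l) := by positivity
  by_contra! c
  have : (0 : ℝ) < h + l + 1 := by positivity
  nlinarith [mul_nonneg p (Nat.cast_nonneg (α := ℝ) l), mul_lt_mul_of_pos_right c this]

theorem odd_anti (h l : ℕ) :
    ((2 * h + 1).choose (h + 1 + (l + 1)) : ℝ) ≤ (2 * h + 1).choose (h + 1 + l) := by
  have := odd_ratio h l
  have p : (0 : ℝ) ≤ (2 * h + 1).choose (h + 1 + l) := by positivity
  by_contra! c
  have : (0 : ℝ) < h + l + 2 := by positivity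
  nlinarith [mul_nonneg p (Nat.cast_nonneg (α := ℝ) l), mul_lt_mul_of_pos_right c this]

theorem pascal2 (n k : ℕ) :
    ((n + 2).choose (k + 2) : ℝ) = n.choose k + 2 * n.choose (k + 1) + n.choose (k + 2) := by
  rw [Nat.choose_succ_succ (n + 1), Nat.choose_succ_succ n, Nat.choose_succ_succ n]
  push_cast; ring

/-- Two further steps of the walk change `P(|S| ≤ 2r)` only through exchange between the atoms
`±2r` and `±(2r + 2)`. -/
theorem f_succ (h r : ℕ) : f (h + 1) r
    = 4 * f h r + 2 * (2 * h).choose (h + r + 1) - 2 * (2 * h).choose (h + r) := by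
  induction r with
  | zero =>
    simp only [f, range_zero, sum_empty]
    rcases h with _ | h
    · norm_num [Nat.choose]
    · rw [show 2 * (h + 1 + 1) = 2 * (h + 1) + 2 by ring, pascal2,
        Nat.choose_symm_of_eq_add (n := 2 * (h + 1)) (a := h) (b := h + 2) (by ring)]
      ring_nf
  | succ r ih =>
    have e : ∀ h r, f h (r + 1) = f h r + 2 * (2 * h).choose (h + r + 1) := by
      intro h r; rw [f, f, sum_range_succ]; ring
    rw [e, e, ih, show 2 * (h + 1) = 2 * h + 2 by ring,
      show h + 1 + r + 1 = h + r + 2 by ring, pascal2,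
      show h + (r + 1) = h + r + 1 by ring]
    ring

/-- The odd-length analogue of `f_succ`, with the atoms `±(2r + 1)` and `±(2r + 3)`. -/
theorem g_succ (h r : ℕ) : g (h + 1) (r + 1)
    = 4 * g h (r + 1) + 2 * (2 * h + 1).choose (h + 1 + (r + 1))
      - 2 * (2 * h + 1).choose (h + 1 + r) := by
  have e : ∀ h r, g h (r + 1) = g h r + 2 * (2 * h + 1).choose (h + 1 + r) := by
    intro h r; rw [g, g, sum_range_succ]; ring
  induction r with
  | zero =>
    simp only [g, zero_add, sum_range_one]
    rw [show 2 * (h + 1) + 1 = (2 * h + 1) + 2 by ring, show h + 1 + 1 + 0 = h + 2 by ring, pascal2,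
        Nat.choose_symm_of_eq_add (n := 2 * h + 1) (a := h) (b := h + 1) (by ring)]
    simp only [add_zero, add_assoc]
    ring
  | succ r ih =>
    rw [e, e h, ih, show 2 * (h + 1) + 1 = 2 * h + 1 + 2 by ring,
      show h + 1 + 1 + (r + 1) = h + 1 + r + 2 by ring, pascal2]
    simp only [← add_assoc]
    rw [show h + 1 + r + 1 + 1 = h + 1 + r + 2 by ring]
    ring

/-- For a fixed threshold, `P(|S₂ₕ| ≤ 2r)` decreases in `h`. -/
theorem F_anti (r : ℕ) : Antitone fun h => f h r / 2 ^ (2 * h) := by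
  refine antitone_nat_of_succ_le fun h => ?_
  have : f (h + 1) r ≤ 4 * f h r := by
    rw [f_succ]; linarith [even_anti h r]
  rw [show 2 * (h + 1) = 2 * h + 2 by ring, pow_add, div_le_div_iff₀ (by positivity) (by positivity)]
  nlinarith [pow_pos (two_pos : (0 : ℝ) < 2) (2 * h)]

/-- For a fixed threshold, `P(|S₂ₕ₊₁| ≤ 2r + 1)` decreases in `h`. -/
theorem G_anti (r : ℕ) : Antitone fun h => g h (r + 1) / 2 ^ (2 * h + 1) := by
  refine antitone_nat_of_succ_le fun h => ?_
  have : g (h + 1) (r + 1) ≤ 4 * g h (r + 1) := by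
    rw [g_succ]; linarith [odd_anti h r]
  rw [show 2 * (h + 1) + 1 = 2 * h + 1 + 2 by ring, pow_add _ _ 2,
    div_le_div_iff₀ (by positivity) (by positivity)]
  nlinarith [pow_pos (two_pos : (0 : ℝ) < 2) (2 * h + 1)]

/-! ### Quadratic lower bounds near the centre -/

/-- A quadratic lower bound for the atoms, `P(S₂ₕ = 2l) ≥ P(S₂ₕ = 0) (1 - l² / (h + 1))`: the `l`-th
step down from the centre loses at most the fraction `(2l + 1) / (h + 1)` of the central atom. -/
theorem even_lower (h l : ℕ) : ((2 * h).choose h : ℝ) * (h + 1 - l ^ 2)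
    ≤ (2 * h).choose (h + l) * (h + 1) := by
  induction l with
  | zero => simp
  | succ l ih =>
    have a := even_ratio h l
    have b := even_anti h l
    have c : ((2 * h).choose (h + l) : ℝ) ≤ (2 * h).choose h := by
      exact_mod_cast (by simpa [Nat.centralBinom] using Nat.choose_le_centralBinom (h + l) h)
    rw [show h + (l + 1) = h + l + 1 by ring]
    push_cast
    have hl : (0 : ℝ) ≤ l := by positivity
    nlinarith [mul_nonneg hl (sub_nonneg.2 b), mul_nonneg hl (sub_nonneg.2 c)]

/-- The odd-length analogue of `even_lower`:
`P(S₂ₕ₊₁ = 2l + 1) ≥ P(S₂ₕ₊₁ = 1) (1 - l (l + 1) / (h + 2))`. -/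
theorem odd_lower (h l : ℕ) : ((2 * h + 1).choose (h + 1) : ℝ) * (h + 2 - l * (l + 1))
    ≤ (2 * h + 1).choose (h + 1 + l) * (h + 2) := by
  have c : ((2 * h + 1).choose (h + 1 + l) : ℝ) ≤ (2 * h + 1).choose (h + 1) :=
    antitone_nat_of_succ_le (f := fun l => ((2 * h + 1).choose (h + 1 + l) : ℝ))
      (odd_anti h) (Nat.zero_le l)
  induction l with
  | zero => simp
  | succ l ih =>
    have a := odd_ratio h l
    have b := odd_anti h l
    have c : ((2 * h + 1).choose (h + 1 + l) : ℝ) ≤ (2 * h + 1).choose (h + 1) :=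
      antitone_nat_of_succ_le (f := fun l => ((2 * h + 1).choose (h + 1 + l) : ℝ))
        (odd_anti h) (Nat.zero_le l)
    have ih := ih c
    push_cast
    have hl : (0 : ℝ) ≤ l := by positivity
    nlinarith [mul_nonneg hl (sub_nonneg.2 b), mul_nonneg hl (sub_nonneg.2 c)]

theorem f_lower (h r : ℕ) : ((2 * h).choose h : ℝ) * (2 * r + 1) * (h + 1 - r * (r + 1) / 3)
    ≤ f h r * (h + 1) := by
  induction r with
  | zero => simp [f]
  | succ r ih =>
    have := even_lower h (r + 1)
    rw [f, sum_range_succ]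
    rw [f] at ih
    push_cast at this ⊢
    rw [← add_assoc h r 1] at this
    nlinarith

theorem g_lower (h r : ℕ) :
    2 * ((2 * h + 1).choose (h + 1) : ℝ) * r * (h + 2 - (r ^ 2 - 1) / 3) ≤ g h r * (h + 2) := by
  induction r with
  | zero => simp [g]
  | succ r ih =>
    have := odd_lower h r
    rw [g, sum_range_succ]
    rw [g] at ih
    push_cast
    nlinarith

/-! ### Return probabilities and the main estimates -/

/-- The return probability `P(S₂ₙ = 0) = C(2n, n) / 4ⁿ`. -/
noncomputable def c (n : ℕ) : ℝ := (2 * n).choose n / 2 ^ (2 * n)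

theorem c_nonneg (n : ℕ) : 0 ≤ c n := by unfold c; positivity

/-- The scaled return probability `c n * √(4n + 1)` is increasing; squared to avoid the root. -/
theorem c_mono : Monotone fun n : ℕ => c n ^ 2 * (4 * n + 1) := by
  refine monotone_nat_of_le_succ fun n => ?_
  have h := congrArg (Nat.cast : ℕ → ℝ) (Nat.succ_mul_centralBinom_succ n)
  simp only [Nat.centralBinom] at h
  push_cast at h
  have e : c (n + 1) = c n * ((2 * n + 1) / (2 * n + 2)) := by
    unfold c
    rw [show (2:ℝ) ^ (2 * (n + 1)) = 2 ^ (2 * n) * 4 by ring]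
    field_simp
    linarith
  rw [e, mul_pow, mul_assoc]
  refine mul_le_mul_of_nonneg_left ?_ (sq_nonneg _)
  rw [div_pow, div_mul_eq_mul_div, le_div_iff₀ (by positivity)]
  push_cast
  nlinarith

/-- The bound at even times `2h`, with threshold `2(i - 1)`. By `F_anti` only the last admissible time
`h = i² m - 1` matters; there `f_lower` and `c_mono` leave a polynomial inequality in `i` and `m`. -/
theorem even_bound (m i h : ℕ) (hm : 2 ≤ m) (hi : 1 ≤ i) (hh : h < i ^ 2 * m) :
    c (m - 1) ≤ P (2 * h) (2 * i - 2) := by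
  obtain ⟨b, rfl⟩ := Nat.exists_eq_add_of_le hm
  obtain ⟨a, rfl⟩ := Nat.exists_eq_add_of_le hi
  rw [show 2 * ((1 + a : ℕ) : ℤ) - 2 = 2 * a by push_cast; ring, P_even]
  obtain ⟨N, hN⟩ : ∃ N, N + 1 = (1 + a) ^ 2 * (2 + b) := ⟨(1 + a) ^ 2 * (2 + b) - 1, by omega⟩
  refine le_trans ?_ (F_anti a (show h ≤ N by omega))
  have hl := f_lower N a
  have hN' : (N : ℝ) + 1 = (1 + a) ^ 2 * (2 + b) := by exact_mod_cast hN
  have hmono := c_mono (show 2 + b - 1 ≤ N by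
    have : 2 + b ≤ (1 + a) ^ 2 * (2 + b) := Nat.le_mul_of_pos_left _ (by positivity)
    omega)
  have hb : ((2 + b - 1 : ℕ) : ℝ) = 1 + b := by
    rw [show 2 + b - 1 = 1 + b by omega]; push_cast; ring
  simp only [hb] at hmono
  set x := c (2 + b - 1)
  have hl' : c N * ((2 * a + 1) * (N + 1 - a * (a + 1) / 3)) ≤ f N a / 2 ^ (2 * N) * (N + 1) := by
    unfold c
    rw [div_mul_eq_mul_div, div_mul_eq_mul_div]
    refine div_le_div_of_nonneg_right ?_ (by positivity)
    linarith
  have hp : (0 : ℝ) < N + 1 := by positivity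
  refine le_of_mul_le_mul_right (le_trans ?_ hl') hp
  rw [hN'] at hp ⊢
  have hfac : (0 : ℝ) ≤ (1 + a) ^ 2 * (2 + b) - a * (a + 1) / 3 := by
    nlinarith [mul_nonneg (Nat.cast_nonneg (α := ℝ) a) (Nat.cast_nonneg (α := ℝ) b),
      Nat.cast_nonneg (α := ℝ) a, Nat.cast_nonneg (α := ℝ) b, mul_nonneg (sq_nonneg (a : ℝ)) (Nat.cast_nonneg (α := ℝ) b)]
  have hc := c_nonneg N
  refine abs_le_of_sq_le_sq' ?_ (by positivity) |>.2
  have hq : (0 : ℝ) < 4 * N + 1 := by positivity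
  -- With `i = 1 + a` and `m = 2 + b`, the difference of the two sides is a polynomial in `a, b`
  -- with nonnegative coefficients.
  have hpoly : ((1 + a : ℝ) ^ 2 * (2 + b)) ^ 2 * (4 * N + 1) ≤
      ((2 * a + 1) * ((1 + a) ^ 2 * (2 + b) - a * (a + 1) / 3)) ^ 2 * (4 * (1 + b) + 1) := by
    rw [show (4 : ℝ) * N + 1 = 4 * ((1 + a) ^ 2 * (2 + b)) - 3 by rw [← hN']; ring]
    rw [← sub_nonneg]
    ring_nf
    positivity
  refine le_of_mul_le_mul_right ?_ hq
  calc _ = x ^ 2 * (((1 + a : ℝ) ^ 2 * (2 + b)) ^ 2 * (4 * N + 1)) := by ring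
    _ ≤ x ^ 2 *
        (((2 * a + 1) * ((1 + a) ^ 2 * (2 + b) - a * (a + 1) / 3)) ^ 2 * (4 * (1 + b) + 1)) := by
        gcongr
    _ = (x ^ 2 * (4 * (1 + b) + 1)) *
        ((2 * a + 1) * ((1 + a) ^ 2 * (2 + b) - a * (a + 1) / 3)) ^ 2 := by ring
    _ ≤ (c N ^ 2 * (4 * N + 1)) *
        ((2 * a + 1) * ((1 + a) ^ 2 * (2 + b) - a * (a + 1) / 3)) ^ 2 := by gcongr
    _ = _ := by ring

/-- The bound at odd times `2h + 1`, with threshold `2i - 1`. By `G_anti` only the last admissible time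
matters; there `g_lower` and `c_mono` leave a polynomial inequality in `i` and `m`, which is an equality
at `i = 1`, `m = 2`. -/
theorem odd_bound (m i h : ℕ) (hm : 2 ≤ m) (hi : 1 ≤ i) (hh : 4 * h + 2 < (2 * i + 1) ^ 2 * m) :
    c (m - 1) ≤ P (2 * h + 1) (2 * i - 1) := by
  obtain ⟨b, rfl⟩ := Nat.exists_eq_add_of_le hm
  obtain ⟨a, rfl⟩ := Nat.exists_eq_add_of_le hi
  rw [add_comm 1 a, P_odd]
  obtain ⟨K, hK⟩ : ∃ K, K = (2 * (1 + a) + 1) ^ 2 * (2 + b) := ⟨_, rfl⟩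
  have hKm : 9 * (2 + b) ≤ K := by
    rw [hK]; refine Nat.mul_le_mul_right _ ?_; nlinarith
  rw [← hK] at hh
  obtain ⟨N, hN1, hN2⟩ : ∃ N, 4 * (N + 1) ≤ K + 1 ∧ K + 2 ≤ 4 * (N + 2) :=
    ⟨(K + 1) / 4 - 1, by omega, by omega⟩

  refine le_trans ?_ (G_anti a (show h ≤ N by omega))
  have hl := g_lower N (a + 1)
  have hmono := c_mono (show 2 + b - 1 ≤ N + 1 by omega)
  have hb : ((2 + b - 1 : ℕ) : ℝ) = 1 + b := by
    rw [show 2 + b - 1 = 1 + b by omega]; push_cast; ring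
  simp only [hb] at hmono
  push_cast at hmono hl
  set x := c (2 + b - 1)
  have hcN : c (N + 1) = (2 * N + 1).choose (N + 1) / 2 ^ (2 * N + 1) := by
    unfold c
    rw [show 2 * (N + 1) = 2 * N + 1 + 1 by ring, Nat.choose_succ_succ,
      Nat.choose_symm_of_eq_add (n := 2 * N + 1) (a := N) (b := N + 1) (by ring), pow_succ _ (2 * N + 1)]
    push_cast
    field_simp
    norm_num
  have hl' : c (N + 1) * (2 * (a + 1) * (N + 2 - ((a + 1) ^ 2 - 1) / 3))
      ≤ g N (a + 1) / 2 ^ (2 * N + 1) * (N + 2) := by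
    rw [hcN, div_mul_eq_mul_div, div_mul_eq_mul_div]
    refine div_le_div_of_nonneg_right ?_ (by positivity)
    linarith
  have hp : (0 : ℝ) < N + 2 := by positivity
  refine le_of_mul_le_mul_right (le_trans ?_ hl') hp
  -- The last admissible `N` depends on a residue mod 4; `T` bounds `4N + 5` from above and `4 (N + 2)`
  -- from below, so that the rest depends on `a` and `b` only.
  obtain ⟨T, hT⟩ : ∃ T : ℝ, T = (2 * (1 + a) + 1) ^ 2 * (2 + b) + 2 := ⟨_, rfl⟩
  have hT0 : 0 < T := by rw [hT]; positivity
  have hTK : T = K + 2 := by rw [hT, hK]; push_cast; ring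
  have h1 : (4 : ℝ) * (N + 1) + 1 ≤ T := by rw [hTK]; exact_mod_cast (by omega : 4 * (N + 1) + 1 ≤ K + 2)
  have h2 : T ≤ 4 * (N + 2) := by rw [hTK]; exact_mod_cast hN2
  have ha : (0 : ℝ) ≤ a := by positivity
  have hfac0 : 0 ≤ 3 * T - 4 * ((a + 1 : ℝ) ^ 2 - 1) := by
    rw [hT]; ring_nf
    nlinarith [mul_nonneg ha (Nat.cast_nonneg (α := ℝ) b),
      Nat.cast_nonneg (α := ℝ) b, mul_nonneg (sq_nonneg (a : ℝ)) (Nat.cast_nonneg (α := ℝ) b)]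
  have hfac1 : (N + 2 : ℝ) * (3 * T - 4 * ((a + 1 : ℝ) ^ 2 - 1))
      ≤ 3 * T * (N + 2 - ((a + 1) ^ 2 - 1) / 3) := by
    nlinarith [mul_nonneg (show (0 : ℝ) ≤ (a + 1) ^ 2 - 1 by nlinarith) (sub_nonneg.2 h2)]
  -- As a polynomial in `a, b`, the difference of the two sides has nonnegative coefficients.
  have hpoly : 9 * T ^ 3
      ≤ 4 * (a + 1) ^ 2 * (3 * T - 4 * ((a + 1 : ℝ) ^ 2 - 1)) ^ 2 * (4 * (1 + b) + 1) := by
    rw [← sub_nonneg, hT]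
    ring_nf
    positivity
  have hc := c_nonneg (N + 1)
  have hx : x * (3 * T) ≤ c (N + 1) * (2 * (a + 1) * (3 * T - 4 * ((a + 1 : ℝ) ^ 2 - 1))) := by
    refine abs_le_of_sq_le_sq' ?_ (by positivity) |>.2
    refine le_of_mul_le_mul_right ?_ hT0
    calc _ = x ^ 2 * (9 * T ^ 3) := by ring
      _ ≤ x ^ 2 *
        (4 * (a + 1) ^ 2 * (3 * T - 4 * ((a + 1 : ℝ) ^ 2 - 1)) ^ 2 * (4 * (1 + b) + 1)) := by gcongr
      _ = (x ^ 2 * (4 * (1 + b) + 1)) *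
        (2 * (a + 1) * (3 * T - 4 * ((a + 1 : ℝ) ^ 2 - 1))) ^ 2 := by ring
      _ ≤ (c (N + 1) ^ 2 * T) * (2 * (a + 1) * (3 * T - 4 * ((a + 1 : ℝ) ^ 2 - 1))) ^ 2 := by
        exact mul_le_mul_of_nonneg_right (hmono.trans (by gcongr)) (sq_nonneg _)
      _ = _ := by ring
  refine le_of_mul_le_mul_right ?_ (show 0 < 3 * T by positivity)
  calc _ = x * (3 * T) * (N + 2) := by ring
    _ ≤ c (N + 1) * (2 * (a + 1) * (3 * T - 4 * ((a + 1 : ℝ) ^ 2 - 1))) * (N + 2) := by gcongr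
    _ = c (N + 1) * (2 * (a + 1)) * ((N + 2) * (3 * T - 4 * ((a + 1 : ℝ) ^ 2 - 1))) := by ring
    _ ≤ c (N + 1) * (2 * (a + 1)) * (3 * T * (N + 2 - ((a + 1) ^ 2 - 1) / 3)) := by gcongr
    _ = _ := by ring

/-! ### The threshold `ξ√n` and the times `n₁`, `n₂` -/

theorem P_le_Pxi {ξ : ℝ} {n : ℕ} {k : ℤ} (h : (k : ℝ) ≤ ξ * √n) : P n k ≤ Pxi ξ n :=
  pr_mono fun ε hε => le_trans (by exact_mod_cast hε) h

/-- If `ξ² ≥ 2/m`, then `c (m - 1)` bounds `P(|Sₙ| ≤ ξ√n)` from below at every even `n`, and at every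
odd `n` for which the atoms `±1` are within the threshold. -/
theorem c_le_Pxi {ξ : ℝ} (hξ : 0 < ξ) {m : ℕ} (hm : 2 ≤ m) (hmξ : 2 ≤ m * ξ ^ 2) {n : ℕ}
    (hn : Odd n → 1 ≤ n * ξ ^ 2) : c (m - 1) ≤ Pxi ξ n := by
  have hx0 : 0 ≤ ξ * √n := by positivity
  have hx2 : (ξ * √n) ^ 2 = n * ξ ^ 2 := by
    rw [mul_pow, Real.sq_sqrt (by positivity)]; ring
  have htrans : ∀ j : ℕ, ξ * √n < j → 2 * n < j ^ 2 * m := by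
    intro j hj
    have h1 : (n : ℝ) * ξ ^ 2 < j ^ 2 := by rw [← hx2]; gcongr
    have h2 : (2 * n : ℝ) * ξ ^ 2 < j ^ 2 * m * ξ ^ 2 := by
      nlinarith [sq_nonneg (j : ℝ)]
    exact_mod_cast lt_of_mul_lt_mul_right h2 (sq_nonneg ξ)
  obtain ⟨h, rfl | rfl⟩ := n.even_or_odd'
  · have hfl := Nat.floor_le (div_nonneg hx0 zero_le_two)
    have hlt := Nat.lt_floor_add_one (ξ * √(2 * h : ℕ) / 2)
    set i := ⌊ξ * √(2 * h : ℕ) / 2⌋₊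
    have := htrans (2 * (i + 1)) (by push_cast at hlt ⊢; linarith)
    refine (even_bound m (i + 1) h hm (by omega) (by nlinarith)).trans (P_le_Pxi ?_)
    push_cast at hfl ⊢
    linarith
  · have h1 : 1 ≤ ξ * √(2 * h + 1 : ℕ) := by
      have := hn ⟨h, rfl⟩
      rw [← hx2] at this
      exact (one_le_sq_iff₀ hx0).1 this
    have hfl := Nat.floor_le (a := (ξ * √(2 * h + 1 : ℕ) + 1) / 2) (by positivity)
    have hlt := Nat.lt_floor_add_one ((ξ * √(2 * h + 1 : ℕ) + 1) / 2)
    have hi : 1 ≤ ⌊(ξ * √(2 * h + 1 : ℕ) + 1) / 2⌋₊ := Nat.le_floor (by push_cast at h1 ⊢; linarith)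
    set i := ⌊(ξ * √(2 * h + 1 : ℕ) + 1) / 2⌋₊
    have := htrans (2 * i + 1) (by push_cast at hlt ⊢; linarith)
    refine (odd_bound m i h hm hi (by linarith)).trans (P_le_Pxi ?_)
    push_cast at hfl ⊢
    linarith

/-- If `ξ√(2j) < 2`, the only atom of `S₂ⱼ` within the threshold is `0`. -/
theorem Pxi_eq_c {ξ : ℝ} (hξ : 0 ≤ ξ) {j : ℕ} (h : j * ξ ^ 2 < 2) : Pxi ξ (2 * j) = c j := by
  have h0 := P_even j 0
  simp only [f, range_zero, sum_empty, mul_zero, add_zero] at h0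
  rw [c, ← h0]
  refine pr_congr fun ε => ?_
  have hx2 : (ξ * √(2 * j : ℕ)) ^ 2 < 2 ^ 2 := by
    rw [mul_pow, Real.sq_sqrt (by positivity)]; push_cast; linarith
  have hx : ξ * √(2 * j : ℕ) < 2 := lt_of_pow_lt_pow_left₀ 2 zero_le_two hx2
  constructor
  · intro hε
    have : |S (2 * j) ε| < 2 := by exact_mod_cast hε.trans_lt hx
    rw [S_eq] at this ⊢
    push_cast at this ⊢
    grind
  · intro hε
    have : S (2 * j) ε = 0 := by simpa using hε
    rw [this]
    simp only [Int.cast_zero, abs_zero]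
    positivity

theorem nseq_two (ξ : ℝ) : nseq ξ 2 = 2 * ⌈2 / ξ ^ 2⌉ - 1 := by
  unfold nseq
  rw [show (((2 : ℕ) : ℝ) ^ 2 / ξ ^ 2 + (2 : ℕ)) / 2 = 2 / ξ ^ 2 + 1 by push_cast; ring,
    Int.ceil_add_one]
  push_cast; ring

theorem nseq_one (ξ : ℝ) : nseq ξ 1 = 2 * ⌈(1 / ξ ^ 2 + 1) / 2⌉ - 2 := by
  unfold nseq
  push_cast; ring_nf

end Rademacher

/-- if `0 < ξ ≤ 1`, `n₂ ≥ 3` and `n₂` is odd, then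
`2/√(n₂+1) ≤ ξ < 2/√(n₂−1)`, `n₁ = 2⌈(n₂−3)/8⌉`, and for all `n ≥ n₁`,
`Pₙ ≥ P_{n₂−1} = C(n₂−1,(n₂−1)/2)·2^(−(n₂−1))`. -/
theorem stmt_6 (ξ : ℝ) (hξ0 : 0 < ξ) (hξ1 : ξ ≤ 1)
    (h3 : 3 ≤ nseq ξ 2) (hodd : Odd (nseq ξ 2)) :
    (2 / Real.sqrt ((nseq ξ 2 : ℝ) + 1) ≤ ξ ∧ ξ < 2 / Real.sqrt ((nseq ξ 2 : ℝ) - 1)) ∧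
    nseq ξ 1 = 2 * ⌈((nseq ξ 2 : ℝ) - 3) / 8⌉ ∧
    (∀ n : ℕ, nseq ξ 1 ≤ (n : ℤ) → Pxi ξ (nseq ξ 2 - 1).toNat ≤ Pxi ξ n) ∧
    Pxi ξ (nseq ξ 2 - 1).toNat =
      ((nseq ξ 2 - 1).toNat.choose ((nseq ξ 2 - 1).toNat / 2) : ℝ) /
        2 ^ (nseq ξ 2 - 1).toNat := by
  rw [Rademacher.nseq_two] at h3
  obtain ⟨m, hm⟩ : ∃ m : ℕ, ⌈2 / ξ ^ 2⌉ = m := Int.eq_ofNat_of_zero_le (by omega)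
  have h2 : nseq ξ 2 = 2 * m - 1 := by rw [Rademacher.nseq_two, hm]
  have hm2 : 2 ≤ m := by omega
  have hN : (nseq ξ 2 - 1).toNat = 2 * (m - 1) := by omega
  have hξ2 : 0 < ξ ^ 2 := by positivity
  obtain ⟨hlow, hup⟩ := Int.ceil_eq_iff.1 hm
  have hR : ((m - 1 : ℕ) : ℝ) = m - 1 := by push_cast [show 1 ≤ m by omega]; ring
  have hm1 : (1 : ℝ) ≤ m - 1 := by rw [← hR]; exact_mod_cast (by omega : 1 ≤ m - 1)
  have hA : 2 ≤ m * ξ ^ 2 := by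
    rw [div_le_iff₀ hξ2] at hup; exact_mod_cast hup
  have hB : (m - 1) * ξ ^ 2 < 2 := by
    rw [lt_div_iff₀ hξ2] at hlow; exact_mod_cast hlow
  have hc : Pxi ξ (nseq ξ 2 - 1).toNat = Rademacher.c (m - 1) := by
    rw [hN]; exact Rademacher.Pxi_eq_c hξ0.le (by rw [hR]; exact hB)
  refine ⟨⟨?_, ?_⟩, ?_, fun n hn => ?_, ?_⟩
  · rw [h2]; push_cast
    rw [div_le_iff₀ (Real.sqrt_pos.2 (by linarith))]
    refine (abs_le_of_sq_le_sq' ?_ (by positivity)).2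
    rw [mul_pow, Real.sq_sqrt (by linarith)]; linarith
  · rw [h2]; push_cast
    rw [lt_div_iff₀ (Real.sqrt_pos.2 (by linarith))]
    refine lt_of_pow_lt_pow_left₀ 2 zero_le_two ?_
    rw [mul_pow, Real.sq_sqrt (by linarith)]; linarith
  · rw [Rademacher.nseq_one, h2]
    -- `(1/ξ² + 1)/2` lies in `((m + 1)/4, (m + 2)/4]`, where the ceiling is constant as `m` is an integer.
    have hx : 1 / ξ ^ 2 = (2 / ξ ^ 2) / 2 := by ring
    rw [hx]
    generalize 2 / ξ ^ 2 = y at hlow hup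
    obtain ⟨t, ht⟩ : ∃ t : ℤ, ⌈(((2 * m - 1 : ℤ) : ℝ) - 3) / 8⌉ = t := ⟨_, rfl⟩
    rw [ht]
    obtain ⟨u, v⟩ := Int.ceil_eq_iff.1 ht
    push_cast at u v hlow hup
    have u' : 4 * (t - 1) < m - 2 := by
      have : (4 * ((t : ℝ) - 1)) < m - 2 := by linarith
      exact_mod_cast this
    have u'' : (4 * (t - 1) : ℝ) ≤ m - 3 := by
      have : 4 * (t - 1) ≤ (m : ℤ) - 3 := by omega
      exact_mod_cast this
    have : ⌈(y / 2 + 1) / 2⌉ = t + 1 := by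
      rw [Int.ceil_eq_iff]; push_cast; constructor <;> linarith
    rw [this]; ring
  · rw [hc]
    refine Rademacher.c_le_Pxi hξ0 hm2 hA fun hn' => ?_
    rw [Rademacher.nseq_one] at hn
    obtain ⟨h, rfl⟩ := hn'
    have : ⌈(1 / ξ ^ 2 + 1) / 2⌉ ≤ h + 1 := by omega
    rw [Int.ceil_le] at this
    have h1 : 1 / ξ ^ 2 ≤ 2 * h + 1 := by push_cast at this; linarith
    rw [div_le_iff₀ hξ2] at h1
    exact_mod_cast h1
  · rw [hc, hN, Rademacher.c, Nat.mul_div_cancel_left _ two_pos]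
end
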